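/- arXiv:1008.0804 — 3 statements merged into one kernel-verified Lean document; each statement's English description precedes it below -/
import Mathlib

section
/- Let n ≥ 3 and let AQ be the polynomial ring in variables fⁱ[s], gⱼ[t] (1 ≤ i,j ≤ n, −N₁ ≤ s,t ≤ N₂) modulo the ideal generated by r[l] = Σ_{s+t=l} Σ_{i=1}^n fⁱ[s]gᵢ[t] for −2N₁ ≤ l ≤ 2N₂. Then the relations {r[l]} form a Gröbner basis of this ideal with respect to a degree-lexicographic order in which the leading monomial of r[l] for even l=2t is g₁[t]f¹[t] and for odd l=2t+1 is gₙ[t]fⁿ[t+1]; in particular, the leading monomials of the generators generate the leading-monomial ideal. -/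
/-!
The order compares monomials first by a weight and then lexicographically. The weight of a
variable is a large constant minus a square: `(2s)²` for `f¹[s]` and `g₁[s]`, `(2s - 1)²` for
`fⁿ[s]` and `(2s + 1)²` for `gₙ[s]`; all other variables have weight `0`. Among the terms of
`r[l]`, where `s + t = l`, the parallelogram identity gives
`(2s)² + (2t)² = 2l² + 2(s - t)²` and `(2s - 1)² + (2t + 1)² = 2l² + 2(s - t - 1)²`,
so the unique term of maximal weight is `f¹[t]g₁[t]` when `l = 2t` and `fⁿ[t+1]gₙ[t]` when
`l = 2t + 1` (`degree_qmRel`). These leading monomials are pairwise relatively prime.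

That a finite family of nonzero polynomials with pairwise coprime leading monomials is a
Gröbner basis is proved by induction on the family (`exists_degree_le_of_mem_span`), without
S-polynomials: in `f = g + h * b` with `g` in the ideal of the earlier generators, `h` may be
replaced by its remainder `r` under division by these generators. By coprimality the leading
monomial of `r * b` is then not divisible by any earlier leading monomial, whereas that of `g` is,
so the two cannot cancel.
-/

open MvPolynomial

/-- Index set `{k : ℤ | −N₁ ≤ k ≤ N₂}` for the loop modes. -/
abbrev QIdx (N₁ N₂ : ℕ) := {k : ℤ // k ∈ Finset.Icc (-(N₁ : ℤ)) (N₂ : ℤ)}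

/-- The quasimap relation `r[l] = Σ_{s+t=l} Σ_{i=1}^n fⁱ[s] gᵢ[t]` in the polynomial
ring on variables `fⁱ[s] = X (inl i, s)` and `gⱼ[t] = X (inr j, t)`,
`−N₁ ≤ s,t ≤ N₂`. -/
noncomputable def qmRel (n N₁ N₂ : ℕ) (l : ℤ) :
    MvPolynomial ((Fin n ⊕ Fin n) × QIdx N₁ N₂) ℂ :=
  ∑ p : QIdx N₁ N₂, ∑ q : QIdx N₁ N₂,
    if (p : ℤ) + (q : ℤ) = l then
      ∑ i : Fin n, X (Sum.inl i, p) * X (Sum.inr i, q)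
    else 0

/-- The ideal generated by the relations `r[l]`, `−2N₁ ≤ l ≤ 2N₂`. -/
noncomputable def qmIdeal (n N₁ N₂ : ℕ) :
    Ideal (MvPolynomial ((Fin n ⊕ Fin n) × QIdx N₁ N₂) ℂ) :=
  Ideal.span {p | ∃ l ∈ Finset.Icc (-(2 * N₁ : ℤ)) (2 * N₂ : ℤ), p = qmRel n N₁ N₂ l}

/-- The leading exponent of a polynomial with respect to a monomial order `m`. -/
noncomputable def leadExp {σ : Type*} (m : MonomialOrder σ) (f : MvPolynomial σ ℂ) :
    σ →₀ ℕ :=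
  m.toSyn.symm (f.support.sup (fun d => m.toSyn d))

open scoped MonomialOrder

/-- The monomial order which compares the weights with respect to `w` first and breaks ties
with `m`. Its type synonym is the image of `e ↦ (weight e, e)` in a lexicographic product; the
factor `PUnit` serves only to place this synonym in an arbitrary universe. -/
noncomputable def weightOrder.{v} {σ : Type} (w : σ → ℕ) (m : MonomialOrder.{0, 0} σ) :
    MonomialOrder.{0, v} σ :=
  let φ : (σ →₀ ℕ) →+ Lex (ℕ × Lex (m.syn × PUnit.{v + 1})) :=
    { toFun := fun e => toLex (Finsupp.weight w e, toLex (m.toSyn e, PUnit.unit))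
      map_zero' := by simp only [map_zero]; rfl
      map_add' := fun a b => by simp only [map_add]; rfl }
  { syn := AddMonoidHom.mrange φ
    toSyn := AddEquiv.ofLeftInverse' φ (g := fun x => m.toSyn.symm (ofLex (ofLex x).2).1)
      (fun e => by simp [φ])
    toSyn_monotone := by
      intro a b hab
      change φ a ≤ φ b
      refine Prod.Lex.toLex_mono ⟨?_, Prod.Lex.toLex_mono ⟨m.toSyn_monotone hab, le_rfl⟩⟩
      obtain ⟨c, rfl⟩ := exists_add_of_le hab
      simp
    wellFoundedLT_syn := inferInstance }

theorem nonempty_monomialOrder (σ : Type) [Finite σ] : Nonempty (MonomialOrder.{0, 0} σ) := by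
  classical
  let _ : LinearOrder σ := linearOrderOfSTO WellOrderingRel
  exact ⟨MonomialOrder.lex⟩

theorem weightOrder_lt {σ : Type} {w : σ → ℕ} {m : MonomialOrder σ} {a b : σ →₀ ℕ}
    (h : Finsupp.weight w a < Finsupp.weight w b) : a ≺[weightOrder w m] b := by
  change toLex (Finsupp.weight w a, toLex (m.toSyn a, PUnit.unit)) <
    toLex (Finsupp.weight w b, toLex (m.toSyn b, PUnit.unit))
  exact Prod.Lex.toLex_lt_toLex.2 (Or.inl h)

/-- A finite family with pairwise coprime leading monomials is a Gröbner basis of the ideal it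
generates. -/
theorem exists_degree_le_of_mem_span {σ ι : Type*} (m : MonomialOrder σ)
    (b : ι → MvPolynomial σ ℂ) (hb : ∀ i, b i ≠ 0) (S : Finset ι)
    (hd : ∀ i ∈ S, ∀ j ∈ S, i ≠ j →
      Disjoint (m.degree (b i)).support (m.degree (b j)).support) :
    ∀ f ∈ Ideal.span (b '' (S : Set ι)), f ≠ 0 → ∃ i ∈ S, m.degree (b i) ≤ m.degree f := by
  classical
  induction S using Finset.induction_on with
  | empty => intro f hf h0; simp at hf; exact absurd hf h0
  | insert k S hk ih =>
    intro f hf h0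
    have ih' := ih (fun i hi j hj => hd i (Finset.mem_insert_of_mem hi) j
      (Finset.mem_insert_of_mem hj))
    rw [Finset.coe_insert, Set.image_insert_eq, Ideal.mem_span_insert] at hf
    obtain ⟨h, g, hg, rfl⟩ := hf
    obtain ⟨q, r, hq, -, hr⟩ := m.div_set (B := b '' (S : Set ι)) (by
      rintro _ ⟨i, -, rfl⟩
      exact (m.leadingCoeff_ne_zero_iff.2 (hb i)).isUnit) h
    set g' := g + Finsupp.linearCombination _
      (fun x : (b '' (S : Set ι)) => (x : MvPolynomial σ ℂ)) q * b k with hg'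
    have hg'S : g' ∈ Ideal.span (b '' (S : Set ι)) := by
      refine Ideal.add_mem _ hg (Ideal.mul_mem_right _ _ ?_)
      rw [Finsupp.linearCombination_apply]
      exact Submodule.sum_mem _ fun x _ => Ideal.mul_mem_left _ _ (Ideal.subset_span x.2)
    have hf : h * b k + g = g' + r * b k := by rw [hg', hq]; ring
    rw [hf] at h0 ⊢
    by_cases hr0 : r = 0
    · subst hr0
      simp only [zero_mul, add_zero] at h0 ⊢
      obtain ⟨i, hi, hle⟩ := ih' g' hg'S h0
      exact ⟨i, Finset.mem_insert_of_mem hi, hle⟩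
    have hdeg : m.degree (r * b k) = m.degree r + m.degree (b k) := m.degree_mul hr0 (hb k)
    by_cases hg0 : g' = 0
    · refine ⟨k, Finset.mem_insert_self _ _, ?_⟩
      rw [hg0, zero_add, hdeg]
      exact le_add_self
    obtain ⟨i, hi, hle⟩ := ih' g' hg'S hg0
    have hne : m.degree g' ≠ m.degree (r * b k) := by
      intro heq
      rw [heq, hdeg] at hle
      refine hr _ (m.degree_mem_support hr0) (b i) ⟨i, hi, rfl⟩ fun x => ?_
      have hx := hle x
      have hdis := hd i (Finset.mem_insert_of_mem hi) k (Finset.mem_insert_self _ _)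
        (fun h => hk (h ▸ hi))
      by_cases hxi : m.degree (b i) x = 0
      · simp [hxi]
      · have := Finset.disjoint_left.1 hdis (Finsupp.mem_support_iff.2 hxi)
        rw [Finsupp.notMem_support_iff] at this
        simpa [this] using hx
    rcases lt_or_gt_of_ne (fun h => hne (m.toSyn.injective h)) with hlt | hlt
    · refine ⟨k, Finset.mem_insert_self _ _, ?_⟩
      rw [m.degree_add_eq_right_of_lt hlt, hdeg]
      exact le_add_self
    · refine ⟨i, Finset.mem_insert_of_mem hi, ?_⟩
      rwa [m.degree_add_of_lt hlt]

/-- A sum of monomials in which one term strictly outweighs all the others. -/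
theorem degree_sum_monomial {σ κ : Type*} (m : MonomialOrder σ) (T : Finset κ)
    (e : κ → σ →₀ ℕ) (x₀ : κ) (h₀ : x₀ ∈ T) (h : ∀ x ∈ T, x ≠ x₀ → e x ≺[m] e x₀) :
    m.degree (∑ x ∈ T, monomial (e x) (1 : ℂ)) = e x₀ := by
  classical
  have hc : coeff (e x₀) (∑ x ∈ T, monomial (e x) (1 : ℂ)) = 1 := by
    rw [coeff_sum, Finset.sum_eq_single x₀]
    · simp
    · intro x hx hne
      rw [coeff_monomial, if_neg]
      intro heq
      exact (h x hx hne).ne (by rw [heq])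
    · exact fun h => absurd h₀ h
  have hs : e x₀ ∈ (∑ x ∈ T, monomial (e x) (1 : ℂ)).support := by
    rw [mem_support_iff, hc]; exact one_ne_zero
  refine m.toSyn.injective (le_antisymm ?_ (m.le_degree hs))
  rw [m.degree_le_iff]
  intro c hcs
  obtain ⟨x, hx, hxc⟩ := Finset.mem_biUnion.1 (support_sum hcs)
  have : c = e x := by simpa using support_monomial_subset hxc
  subst this
  by_cases hxx : x = x₀
  · rw [hxx]
  · exact (h x hx hxx).le

/-- The exponent of `fⁱ[p] gᵢ[q]`, for `x = (p, q, i)`. -/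
noncomputable def termExp {n N₁ N₂ : ℕ} (x : QIdx N₁ N₂ × QIdx N₁ N₂ × Fin n) :
    ((Fin n ⊕ Fin n) × QIdx N₁ N₂) →₀ ℕ :=
  Finsupp.single (Sum.inr x.2.2, x.2.1) 1 + Finsupp.single (Sum.inl x.2.2, x.1) 1

theorem qmRel_eq_sum (n N₁ N₂ : ℕ) (l : ℤ) :
    qmRel n N₁ N₂ l = ∑ x : QIdx N₁ N₂ × QIdx N₁ N₂ × Fin n with (x.1 : ℤ) + x.2.1 = l,
      monomial (termExp x) (1 : ℂ) := by
  rw [Finset.sum_filter, Fintype.sum_prod_type]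
  simp only [Fintype.sum_prod_type, qmRel]
  refine Finset.sum_congr rfl fun p _ => Finset.sum_congr rfl fun q _ => ?_
  split_ifs
  · refine Finset.sum_congr rfl fun i _ => ?_
    rw [X, X, monomial_mul, termExp, one_mul, add_comm]
  · simp

/-- The weight of a variable. The constant `(2 (N₁ + N₂) + 3)²` exceeds all the squares subtracted
from it, so `Int.toNat` never truncates. -/
def qmWeight (n N₁ N₂ : ℕ) : (Fin n ⊕ Fin n) × QIdx N₁ N₂ → ℕ
  | (Sum.inl i, s) =>
    if i.val = 0 then ((2 * (N₁ + N₂ : ℤ) + 3) ^ 2 - (2 * (s : ℤ)) ^ 2).toNat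
    else if i.val = n - 1 then ((2 * (N₁ + N₂ : ℤ) + 3) ^ 2 - (2 * (s : ℤ) - 1) ^ 2).toNat
    else 0
  | (Sum.inr i, s) =>
    if i.val = 0 then ((2 * (N₁ + N₂ : ℤ) + 3) ^ 2 - (2 * (s : ℤ)) ^ 2).toNat
    else if i.val = n - 1 then ((2 * (N₁ + N₂ : ℤ) + 3) ^ 2 - (2 * (s : ℤ) + 1) ^ 2).toNat
    else 0

/-- The shift `p - q` at which `fⁱ[p] gᵢ[q]` has its largest weight, for `i` the first or last
index. -/
def shift {n : ℕ} (i : Fin n) : ℤ := if i.val = 0 then 0 else 1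

theorem weight_termExp {n N₁ N₂ : ℕ} (x : QIdx N₁ N₂ × QIdx N₁ N₂ × Fin n) :
    (Finsupp.weight (qmWeight n N₁ N₂) (termExp x) : ℤ) =
      if x.2.2.val = 0 ∨ x.2.2.val = n - 1 then
        2 * (2 * (N₁ + N₂ : ℤ) + 3) ^ 2 - 2 * ((x.1 : ℤ) + x.2.1) ^ 2
          - 2 * ((x.1 : ℤ) - x.2.1 - shift x.2.2) ^ 2
      else 0 := by
  obtain ⟨⟨p, hp⟩, ⟨q, hq⟩, i⟩ := x
  rw [Finset.mem_Icc] at hp hq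
  have key : ∀ a : ℤ, |a| ≤ 2 * (N₁ + N₂ : ℤ) + 3 →
      0 ≤ (2 * (N₁ + N₂ : ℤ) + 3) ^ 2 - a ^ 2 := fun a ha =>
    sub_nonneg.2 (sq_le_sq.2 (ha.trans (le_abs_self _)))
  have k1 := key (2 * p) (abs_le.2 ⟨by omega, by omega⟩)
  have k2 := key (2 * p - 1) (abs_le.2 ⟨by omega, by omega⟩)
  have k3 := key (2 * q) (abs_le.2 ⟨by omega, by omega⟩)
  have k4 := key (2 * q + 1) (abs_le.2 ⟨by omega, by omega⟩)
  simp only [termExp, map_add, Finsupp.weight_single, qmWeight, one_smul, shift]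
  by_cases h0 : i.val = 0
  · simp only [h0, true_or, if_true]
    push_cast [Int.toNat_of_nonneg k1, Int.toNat_of_nonneg k3]
    ring
  · by_cases h1 : i.val = n - 1
    · rw [if_neg h0, if_neg h0, if_neg h0, if_pos h1, if_pos h1, if_pos (Or.inr h1)]
      push_cast [Int.toNat_of_nonneg k2, Int.toNat_of_nonneg k4]
      ring
    · simp [h0, h1]

/-- Whatever the tie-breaking order `m`, the leading monomial of a relation is the term whose index
is first or last and whose modes differ by the corresponding `shift`. -/
theorem degree_qmRel {n N₁ N₂ : ℕ} (m : MonomialOrder ((Fin n ⊕ Fin n) × QIdx N₁ N₂))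
    (x : QIdx N₁ N₂ × QIdx N₁ N₂ × Fin n)
    (hi : x.2.2.val = 0 ∨ x.2.2.val = n - 1) (hx : (x.1 : ℤ) - x.2.1 = shift x.2.2) :
    (weightOrder (qmWeight n N₁ N₂) m).degree (qmRel n N₁ N₂ ((x.1 : ℤ) + x.2.1)) =
      termExp x := by
  rw [qmRel_eq_sum]
  refine degree_sum_monomial _ _ _ x (by simp) fun y hy hyx => weightOrder_lt ?_
  rw [Finset.mem_filter] at hy
  have hy := hy.2
  zify
  rw [weight_termExp, weight_termExp, if_pos hi, hx, sub_self, hy]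
  split_ifs with hyi
  ·
    -- Equal weights would make the difference of the modes of `y` equal to its shift. The shift
    -- is `0` or `1` and this difference has the parity of `l`, which forces `y = x`.
    suffices h : (y.1 : ℤ) - y.2.1 - shift y.2.2 ≠ 0 by
      have := sq_pos_of_ne_zero h
      linarith
    intro h
    apply hyx
    have hs : shift y.2.2 = shift x.2.2 ∧ (y.1 : ℤ) = x.1 ∧ (y.2.1 : ℤ) = x.2.1 := by
      unfold shift at *
      split_ifs at * <;> omega
    refine Prod.ext (Subtype.ext hs.2.1) (Prod.ext (Subtype.ext hs.2.2) (Fin.ext ?_))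
    have hs := hs.1
    unfold shift at hs
    split_ifs at hs <;> omega
  · obtain ⟨⟨p, hp⟩, ⟨q, hq⟩, i⟩ := x
    rw [Finset.mem_Icc] at hp hq
    have : (p + q) ^ 2 < (2 * (N₁ + N₂ : ℤ) + 3) ^ 2 :=
      sq_lt_sq' (by omega) (by omega)
    simp only
    linarith

theorem leadExp_eq_degree {σ : Type*} (m : MonomialOrder σ) (f : MvPolynomial σ ℂ) :
    leadExp m f = m.degree f := rfl

theorem exists_lead_index {n N₁ N₂ : ℕ} (hn : 3 ≤ n) (l : ℤ)
    (hl : l ∈ Finset.Icc (-(2 * N₁ : ℤ)) (2 * N₂ : ℤ)) :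
    ∃ x : QIdx N₁ N₂ × QIdx N₁ N₂ × Fin n, (x.1 : ℤ) + x.2.1 = l ∧
      (x.2.2.val = 0 ∨ x.2.2.val = n - 1) ∧ (x.1 : ℤ) - x.2.1 = shift x.2.2 := by
  rw [Finset.mem_Icc] at hl
  rcases Int.even_or_odd' l with ⟨k, hk | hk⟩
  · have hk' : k ∈ Finset.Icc (-(N₁ : ℤ)) (N₂ : ℤ) := Finset.mem_Icc.2 (by omega)
    exact ⟨(⟨k, hk'⟩, ⟨k, hk'⟩, ⟨0, by omega⟩), by simp; omega, by simp, by simp [shift]⟩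
  · have hk' : k ∈ Finset.Icc (-(N₁ : ℤ)) (N₂ : ℤ) := Finset.mem_Icc.2 (by omega)
    have hk1 : k + 1 ∈ Finset.Icc (-(N₁ : ℤ)) (N₂ : ℤ) := Finset.mem_Icc.2 (by omega)
    refine ⟨(⟨k + 1, hk1⟩, ⟨k, hk'⟩, ⟨n - 1, by omega⟩), by simp; omega, by simp, ?_⟩
    have : n - 1 ≠ 0 := by omega
    simp [shift, this]

/-- For `n ≥ 3` the relations `r[l]` form a Gröbner basis of the quasimap ideal
with respect to a (degree-lexicographic) monomial order in which the leading
monomial of `r[2t]` is `g₁[t]·f¹[t]` and that of `r[2t+1]` is `gₙ[t]·fⁿ[t+1]`;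
in particular the leading monomial of every nonzero element of the ideal is
divisible by the leading monomial of one of the generators. -/
theorem stmt7 (n N₁ N₂ : ℕ) (hn : 3 ≤ n) :
    ∃ m : MonomialOrder ((Fin n ⊕ Fin n) × QIdx N₁ N₂),
      (∀ k : QIdx N₁ N₂,
        leadExp m (qmRel n N₁ N₂ (2 * (k : ℤ))) =
          Finsupp.single (Sum.inr ⟨0, by omega⟩, k) 1 +
            Finsupp.single (Sum.inl ⟨0, by omega⟩, k) 1) ∧
      (∀ k k' : QIdx N₁ N₂, (k' : ℤ) = (k : ℤ) + 1 →
        leadExp m (qmRel n N₁ N₂ (2 * (k : ℤ) + 1)) =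
          Finsupp.single (Sum.inr ⟨n - 1, by omega⟩, k) 1 +
            Finsupp.single (Sum.inl ⟨n - 1, by omega⟩, k') 1) ∧
      (∀ f ∈ qmIdeal n N₁ N₂, f ≠ 0 →
        ∃ l ∈ Finset.Icc (-(2 * N₁ : ℤ)) (2 * N₂ : ℤ),
          leadExp m (qmRel n N₁ N₂ l) ≤ leadExp m f) := by
  obtain ⟨m₀⟩ := nonempty_monomialOrder ((Fin n ⊕ Fin n) × QIdx N₁ N₂)
  have h1 : n - 1 ≠ 0 := by omega
  refine ⟨weightOrder (qmWeight n N₁ N₂) m₀, fun k => ?_, fun k k' hk => ?_, ?_⟩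
  · have h := degree_qmRel m₀ (k, k, (⟨0, by omega⟩ : Fin n))
      (by simp) (by simp [shift])
    rw [leadExp_eq_degree, two_mul]
    exact h
  · have h := degree_qmRel m₀ (k', k, (⟨n - 1, by omega⟩ : Fin n))
      (by simp) (by simp [shift, h1, hk])
    rw [leadExp_eq_degree, show 2 * (k : ℤ) + 1 = k' + k by rw [hk]; ring]
    exact h
  · intro f hf hf0
    simp only [leadExp_eq_degree]
    have hI : qmIdeal n N₁ N₂ = Ideal.span
        ((fun l : Finset.Icc (-(2 * N₁ : ℤ)) (2 * N₂ : ℤ) => qmRel n N₁ N₂ l) ''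
          ((Finset.univ : Finset (Finset.Icc (-(2 * N₁ : ℤ)) (2 * N₂ : ℤ))) : Set _)) := by
      rw [qmIdeal]
      congr 1
      ext p
      simp [eq_comm]
    rw [hI] at hf
    have hne : ∀ l : Finset.Icc (-(2 * N₁ : ℤ)) (2 * N₂ : ℤ), qmRel n N₁ N₂ l ≠ 0 := by
      rintro ⟨l, hl⟩
      obtain ⟨x, rfl, hi, hx⟩ := exists_lead_index hn l hl
      refine (weightOrder.{0} (qmWeight n N₁ N₂) m₀).ne_zero_of_degree_ne_zero ?_
      rw [degree_qmRel m₀ x hi hx]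
      simp [termExp]
    have hdj : ∀ l ∈ (Finset.univ : Finset (Finset.Icc (-(2 * N₁ : ℤ)) (2 * N₂ : ℤ))),
        ∀ l' ∈ Finset.univ, l ≠ l' →
        Disjoint ((weightOrder (qmWeight n N₁ N₂) m₀).degree (qmRel n N₁ N₂ l)).support
          ((weightOrder (qmWeight n N₁ N₂) m₀).degree (qmRel n N₁ N₂ l')).support := by
      rintro ⟨l, hl⟩ - ⟨l', hl'⟩ - hne
      obtain ⟨x, rfl, hi, hx⟩ := exists_lead_index hn l hl
      obtain ⟨y, rfl, hi', hy⟩ := exists_lead_index hn l' hl'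
      have hne : (x.1 : ℤ) + x.2.1 ≠ y.1 + y.2.1 := fun h => hne (Subtype.ext h)
      simp only [degree_qmRel m₀ x hi hx, degree_qmRel m₀ y hi' hy]
      -- A common variable determines `i` and one of the modes, hence, via the shift, the other.
      rw [Finset.disjoint_left]
      intro v hv hv'
      have hv := Finsupp.support_add hv
      have hv' := Finsupp.support_add hv'
      simp only [Finset.mem_union, Finsupp.mem_support_single] at hv hv'
      rcases hv with ⟨rfl, -⟩ | ⟨rfl, -⟩ <;> rcases hv' with ⟨h, -⟩ | ⟨h, -⟩ <;>
        simp only [Prod.mk.injEq, Sum.inr.injEq, Sum.inl.injEq, reduceCtorEq, false_and] at h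
      all_goals
        obtain ⟨h2, h3⟩ := h
        rw [h2] at hx
        rw [h3] at hx hne
        omega
    obtain ⟨⟨l, hl⟩, -, hle⟩ := exists_degree_le_of_mem_span
      (weightOrder (qmWeight n N₁ N₂) m₀) _ hne _ hdj f hf hf0
    exact ⟨l, hl, hle⟩
end

section
/- Setting q = 1 in the bigraded Poincaré series of the quasimap algebra gives AQ_{−N₁}^{N₂}(n)(1,t) = (1−t²)^{2(N₁+N₂)+1} / (1−t)^{n(N₁+N₂+1)}; i.e., the total Poincaré series (by polynomial degree alone) of the quotient of a polynomial ring in n(N₁+N₂+1) variables by a regular sequence of 2(N₁+N₂)+1 quadrics equals this rational function. -/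
/-!
The relations degenerate to pairwise coprime monomials, so the quotient has the Hilbert function of
a monomial complete intersection.

After a linear change of coordinates, four of the `n` directions form two hyperbolic planes, and
`r[l] = Σ_{s+t=l} (y₀[s] y₁[t] + y₂[s] y₃[t] + Σ_{i≥4} yᵢ[s] yᵢ[t])`. Give `y₀[s]` and `y₁[s]` the
cost `4 s²`, `y₂[s]` the cost `(2 s + 1)²`, `y₃[s]` the cost `(2 s - 1)²`, and the others
`4 s² + 4`. The unique cheapest term of `r[2s]` is then `y₀[s] y₁[s]`, and that of `r[2s+1]` is
`y₂[s] y₃[s+1]` (`lead_sub_qRel_mem`). These monomials have pairwise disjoint supports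
(`leadMon_disjoint`). Two hyperbolic planes suffice, so the argument works for `n ≥ 4`.

No syzygies are needed to conclude. Call a monomial standard if no leading monomial divides it.
Rewriting shows that standard monomials span the quotient (`hilb_le`), which bounds the Hilbert
function from above. Adjoining a quadric to an ideal with Hilbert function `H` lowers the dimension
in degree `d` by at most `H (d - 2)` (`hilb_insert_ge`), whereas by coprimality the number of
standard monomials drops by exactly the corresponding count (`card_stdMon_insert`). Hence, by
induction on the number of quadrics, both bounds agree (`hilb_eq`), and the same recursion evaluates
the generating function (`mk_stdMon`).
-/


open MvPolynomial

/-- The quasimap relation `r[l] = Σ_{s+t=l} Σᵢ λⁱ[s] λⁱ[t]`, with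
`λⁱ[s] = X (i, s)`. -/
noncomputable def qRel (n N₁ N₂ : ℕ) (l : ℤ) :
    MvPolynomial (Fin n × QIdx N₁ N₂) ℂ :=
  ∑ p : QIdx N₁ N₂, ∑ q : QIdx N₁ N₂,
    if (p : ℤ) + (q : ℤ) = l then ∑ i : Fin n, X (i, p) * X (i, q) else 0

/-- The ideal of the `2(N₁+N₂)+1` quadratic relations `r[l]`, `−2N₁ ≤ l ≤ 2N₂`. -/
noncomputable def qIdeal (n N₁ N₂ : ℕ) :
    Ideal (MvPolynomial (Fin n × QIdx N₁ N₂) ℂ) :=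
  Ideal.span {p | ∃ l ∈ Finset.Icc (-(2 * N₁ : ℤ)) (2 * N₂ : ℤ), p = qRel n N₁ N₂ l}

/-! ### Quadrics with pairwise coprime leading monomials -/

section General

variable {K σ ι : Type*} [Field K]

lemma homog_eq_span (d : ℕ) : homogeneousSubmodule σ K d =
    Submodule.span K {p | ∃ m : σ →₀ ℕ, m.degree = d ∧ p = monomial m 1} := by
  apply le_antisymm
  · intro p hp
    rw [p.as_sum]
    refine Submodule.sum_mem _ fun m hm => ?_
    have hd : m.degree = d := by
      by_contra h
      exact (mem_support_iff.mp hm) (IsHomogeneous.coeff_eq_zero hp h)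
    have : monomial m (coeff m p) = coeff m p • (monomial m 1 : MvPolynomial σ K) := by
      simp [smul_monomial]
    rw [this]
    exact Submodule.smul_mem _ _ (Submodule.subset_span ⟨m, hd, rfl⟩)
  · rw [Submodule.span_le]
    rintro _ ⟨m, hm, rfl⟩
    exact isHomogeneous_monomial 1 hm

/-- The Hilbert function of the quotient of the polynomial ring by the ideal generated by the
`r i`, `i ∈ s`. -/
noncomputable def hilb (r : ι → MvPolynomial σ K) (s : Finset ι) (d : ℕ) : ℕ :=
  Module.finrank K ((homogeneousSubmodule σ K d).map
    (Ideal.Quotient.mkₐ K (Ideal.span (r '' (s : Set ι)))).toLinearMap)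

open Classical in
/-- The monomials of degree `d` divisible by none of the monomials `lead i`, `i ∈ s`. -/
noncomputable def stdMon [Fintype σ] (lead : ι → σ →₀ ℕ) (s : Finset ι) (d : ℕ) :
    Finset (σ →₀ ℕ) :=
  {m ∈ Finset.univ.finsuppAntidiag d | ∀ i ∈ s, ¬ lead i ≤ m}

lemma mem_stdMon [Fintype σ] {lead : ι → σ →₀ ℕ} {s : Finset ι} {d : ℕ} {m : σ →₀ ℕ} :
    m ∈ stdMon lead s d ↔ m.degree = d ∧ ∀ i ∈ s, ¬ lead i ≤ m := by
  classical
  simp [stdMon, Finsupp.degree_eq_sum]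

section Lower

attribute [local instance] MvPolynomial.gradedAlgebra

/-- Multiplying by a form of degree `e` shifts homogeneous components by `e`. -/
lemma homogComp_mul {d e : ℕ} {a b : MvPolynomial σ K} (hb : b.IsHomogeneous e) :
    homogeneousComponent d (a * b) =
      if e ≤ d then homogeneousComponent (d - e) a * b else 0 := by
  have := DirectSum.coe_decompose_mul_of_right_mem (𝒜 := homogeneousSubmodule σ K) (a := a) d
    ((mem_homogeneousSubmodule e b).2 hb)
  have h2 : ∀ (p : MvPolynomial σ K) (i : ℕ),
    (DirectSum.decompose (homogeneousSubmodule σ K) p i : MvPolynomial σ K) =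
      homogeneousComponent i p := fun p i => decomposition.decompose'_apply p i
  simpa only [h2] using this

/-- Since the ideal of the `r j`, `j ∈ s`, is homogeneous, a form of degree `d` in the ideal
enlarged by `r i` is congruent to a multiple `g * r i` with `g` a form of degree `d - 2`. -/
lemma mem_span_insert_homog [DecidableEq ι] {r : ι → MvPolynomial σ K}
    (hr : ∀ i, (r i).IsHomogeneous 2)
    {s : Finset ι} {i : ι} {d : ℕ} {f : MvPolynomial σ K} (hf : f.IsHomogeneous d)
    (hfI : f ∈ Ideal.span (r '' (insert i s : Finset ι))) :
    ∃ g, f - g * r i ∈ Ideal.span (r '' (s : Set ι)) ∧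
      (2 ≤ d → g.IsHomogeneous (d - 2)) ∧ (d < 2 → g = 0) := by
  rw [Finset.coe_insert, Set.image_insert_eq, Ideal.mem_span_insert] at hfI
  obtain ⟨a, z, hz, rfl⟩ := hfI
  have hI : (Ideal.span (r '' (s : Set ι))).IsHomogeneous (homogeneousSubmodule σ K) := by
    refine Ideal.homogeneous_span _ _ ?_
    rintro _ ⟨j, -, rfl⟩
    exact ⟨2, hr j⟩
  have hz' := homogeneousComponent_mem_of_mem hI hz d
  have h1 := homogeneousComponent_eq_self hf
  rw [map_add, homogComp_mul (hr i)] at h1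
  refine ⟨if 2 ≤ d then homogeneousComponent (d - 2) a else 0, ?_, ?_, ?_⟩
  · rw [← h1]
    convert hz' using 1
    split_ifs <;> ring
  · intro h
    rw [if_pos h]
    exact homogeneousComponent_isHomogeneous _ _
  · intro h
    rw [if_neg (by omega)]

instance homogFinite [Finite σ] (d : ℕ) : Module.Finite K (homogeneousSubmodule σ K d) :=
  Module.Finite.iff_fg.2 (homogeneousSubmodule_fg σ K d)

/-- Multiplication by `r i` maps degree `d - 2` of the quotient onto the kernel, in degree `d`, of
adjoining the relation `r i`. -/
lemma hilb_insert_ge [Finite σ] [DecidableEq ι] {r : ι → MvPolynomial σ K}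
    (hr : ∀ i, (r i).IsHomogeneous 2)
    (s : Finset ι) (i : ι) (d : ℕ) :
    hilb r s d ≤ hilb r (insert i s) d + if 2 ≤ d then hilb r s (d - 2) else 0 := by
  set I := Ideal.span (r '' (s : Set ι)) with hI
  set J := Ideal.span (r '' (insert i s : Finset ι)) with hJ
  have hIJ : I ≤ J := Ideal.span_mono (Set.image_mono (by simp))
  set W := (homogeneousSubmodule σ K d).map (Ideal.Quotient.mkₐ K I).toLinearMap with hW
  set φ := (Ideal.Quotient.factorₐ K hIJ).toLinearMap with hφ
  have hWJ : W.map φ = (homogeneousSubmodule σ K d).map (Ideal.Quotient.mkₐ K J).toLinearMap := by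
    rw [hW, ← Submodule.map_comp]
    rfl
  have key := LinearMap.finrank_range_add_finrank_ker (φ.domRestrict W)
  rw [LinearMap.range_domRestrict, hWJ, LinearMap.ker_domRestrict,
    LinearEquiv.finrank_eq (Submodule.equivMapOfInjective W.subtype W.injective_subtype
      ((LinearMap.ker φ).comap W.subtype)), Submodule.map_comap_subtype] at key
  have hle : Module.finrank K (W ⊓ LinearMap.ker φ : Submodule K _) ≤
      if 2 ≤ d then hilb r s (d - 2) else 0 := by
    split_ifs with h2
    · set V := (homogeneousSubmodule σ K (d - 2)).map (Ideal.Quotient.mkₐ K I).toLinearMap with hV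
      have hsub : W ⊓ LinearMap.ker φ ≤
          V.map (LinearMap.mulRight K (Ideal.Quotient.mk I (r i))) := by
        rintro _ ⟨⟨f, hf, rfl⟩, hk⟩
        have hfJ : f ∈ J := Ideal.Quotient.eq_zero_iff_mem.1 hk
        obtain ⟨g, hg, hgd, -⟩ := mem_span_insert_homog hr hf hfJ
        refine ⟨Ideal.Quotient.mk I g, ⟨g, hgd h2, rfl⟩, ?_⟩
        have := (Ideal.Quotient.eq (I := I)).2 hg
        simpa using this.symm
      exact (Submodule.finrank_mono hsub).trans (Submodule.finrank_map_le _ _)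
    · have : W ⊓ LinearMap.ker φ = ⊥ := by
        rw [eq_bot_iff]
        rintro _ ⟨⟨f, hf, rfl⟩, hk⟩
        have hfJ : f ∈ J := Ideal.Quotient.eq_zero_iff_mem.1 hk
        obtain ⟨g, hg, -, hg0⟩ := mem_span_insert_homog hr hf hfJ
        rw [hg0 (by omega), zero_mul, sub_zero] at hg
        exact Ideal.Quotient.eq_zero_iff_mem.2 hg
      rw [this, finrank_bot]
  change Module.finrank K W ≤ Module.finrank K
    ((homogeneousSubmodule σ K d).map (Ideal.Quotient.mkₐ K J).toLinearMap) + _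
  omega

end Lower

section Std

variable [Fintype σ]

/-- By coprimality, multiplication by `lead i` is a bijection from the standard monomials of degree
`d - 2` onto those of degree `d` which are divisible by `lead i`. -/
lemma card_stdMon_insert [DecidableEq ι] {lead : ι → σ →₀ ℕ} (hdeg : ∀ i, (lead i).degree = 2)
    (hdisj : ∀ i j, i ≠ j → Disjoint (lead i).support (lead j).support)
    {s : Finset ι} {i : ι} (hi : i ∉ s) (d : ℕ) :
    (stdMon lead s d).card = (stdMon lead (insert i s) d).card +
      if 2 ≤ d then (stdMon lead s (d - 2)).card else 0 := by
  classical
  have hcop : ∀ j ∈ s, ∀ m, lead j ≤ m + lead i ↔ lead j ≤ m := by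
    intro j hj m
    refine ⟨fun h x => ?_, fun h => h.trans le_self_add⟩
    by_cases hx : lead j x = 0
    · simp [hx]
    · have hne : j ≠ i := by rintro rfl; exact hi hj
      have : lead i x = 0 := by
        by_contra hix
        exact Finset.disjoint_left.1 (hdisj j i hne) (Finsupp.mem_support_iff.2 hx)
          (Finsupp.mem_support_iff.2 hix)
      simpa [this] using h x
  rw [← Finset.card_filter_add_card_filter_not (s := stdMon lead s d) (fun m => ¬ lead i ≤ m)]
  congr 1
  · congr 1
    ext m
    simp only [Finset.mem_filter, mem_stdMon, Finset.forall_mem_insert]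
    tauto
  · split_ifs with h2
    · symm
      refine Finset.card_bij (fun m _ => m + lead i) ?_ ?_ ?_
      · intro m hm
        rw [mem_stdMon] at hm
        simp only [Finset.mem_filter, mem_stdMon, not_not, map_add, hdeg, hm.1]
        refine ⟨⟨by omega, fun j hj => ?_⟩, le_add_self⟩
        rw [hcop j hj]
        exact hm.2 j hj
      · intro a _ b _ h
        exact add_right_cancel h
      · intro m hm
        simp only [Finset.mem_filter, mem_stdMon, not_not] at hm
        obtain ⟨⟨hd, hs⟩, hle⟩ := hm
        have e : m - lead i + lead i = m := tsub_add_cancel_of_le hle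
        refine ⟨m - lead i, ?_, e⟩
        rw [mem_stdMon]
        refine ⟨?_, fun j hj => ?_⟩
        · have := congrArg Finsupp.degree e
          rw [map_add, hdeg] at this
          omega
        · rw [← hcop j hj, e]
          exact hs j hj
    · rw [Finset.card_eq_zero, Finset.filter_eq_empty_iff]
      intro m hm
      rw [mem_stdMon] at hm
      rw [not_not]
      intro hle
      have := congrArg Finsupp.degree (tsub_add_cancel_of_le hle)
      rw [map_add, hdeg] at this
      omega

lemma one_sub_pow_mul_stdMon_empty (lead : ι → σ →₀ ℕ) :
    (1 - PowerSeries.X) ^ (Fintype.card σ) *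
      PowerSeries.mk (fun d => ((stdMon lead ∅ d).card : ℤ)) = 1 := by
  classical
  have h : ∀ d, (stdMon lead ∅ d).card = (Fintype.card σ).multichoose d := by
    intro d
    simp [stdMon, Finset.card_finsuppAntidiag_nat_eq_multichoose]
  simp only [h]
  rcases hc : Fintype.card σ with _ | c
  · rw [pow_zero, one_mul]
    ext d
    cases d <;> simp [PowerSeries.coeff_one]
  · refine Eq.trans ?_ (PowerSeries.mk_add_choose_mul_one_sub_pow_eq_one ℤ c)
    rw [mul_comm]
    congr 1
    ext d
    rw [PowerSeries.coeff_mk, PowerSeries.coeff_mk, Nat.multichoose_eq,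
      show c + 1 + d - 1 = c + d by omega, Nat.choose_symm_add]

lemma mk_stdMon {lead : ι → σ →₀ ℕ} (hdeg : ∀ i, (lead i).degree = 2)
    (hdisj : ∀ i j, i ≠ j → Disjoint (lead i).support (lead j).support) (s : Finset ι) :
    PowerSeries.mk (fun d => ((stdMon lead s d).card : ℤ)) =
      (1 - PowerSeries.X ^ 2) ^ s.card *
        PowerSeries.mk (fun d => ((stdMon lead ∅ d).card : ℤ)) := by
  classical
  induction s using Finset.induction_on with
  | empty => simp
  | insert i s hi ih =>
    rw [Finset.card_insert_of_notMem hi, pow_succ', mul_assoc, ← ih, sub_mul, one_mul]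
    ext d
    have := card_stdMon_insert hdeg hdisj hi d
    rw [map_sub, PowerSeries.coeff_X_pow_mul']
    simp only [PowerSeries.coeff_mk]
    split_ifs at this ⊢ with h
    · omega
    · omega

end Std

section Upper

/-- Monomials in any family of linear forms spanning the linear forms span every degree. -/
lemma homog_le_map_aeval {y : σ → MvPolynomial σ K}
    (hy : ∀ j, (X j : MvPolynomial σ K) ∈ Submodule.span K (Set.range y)) (d : ℕ) :
    homogeneousSubmodule σ K d ≤ (homogeneousSubmodule σ K d).map (aeval y).toLinearMap := by
  have hc : ⇑(aeval y).toLinearMap ∘ (X : σ → MvPolynomial σ K) = y := by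
    funext j
    rw [Function.comp_apply, AlgHom.toLinearMap_apply, aeval_X]
  have h1 : homogeneousSubmodule σ K 1 ≤
      (homogeneousSubmodule σ K 1).map (aeval y).toLinearMap := by
    rw [homogeneousSubmodule_one_eq_span_X, Submodule.map_span, ← Set.range_comp, hc,
      Submodule.span_le, Set.range_subset_iff]
    exact hy
  have h2 := Submodule.map_pow (homogeneousSubmodule σ K 1) (aeval y) d
  rw [homogeneousSubmodule_one_pow] at h2
  rw [h2, ← homogeneousSubmodule_one_pow]
  exact pow_le_pow_left' h1 d

variable [Fintype σ]

/-- Rewriting by the leading monomials: monomials in the linear forms `y` which are divisible by no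
leading monomial span the quotient. -/
lemma hilb_le {r : ι → MvPolynomial σ K} {lead : ι → σ →₀ ℕ}
    (hdeg : ∀ i, (lead i).degree = 2) {y : σ → MvPolynomial σ K}
    (hy : ∀ j, (X j : MvPolynomial σ K) ∈ Submodule.span K (Set.range y)) (w : σ → ℕ)
    (s : Finset ι)
    (hred : ∀ i ∈ s, aeval y (monomial (lead i) (1 : K)) - r i ∈ Submodule.span K
      {p | ∃ m : σ →₀ ℕ, (m.degree = 2 ∧ Finsupp.weight w m < Finsupp.weight w (lead i)) ∧
        p = aeval y (monomial m (1 : K))})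
    (d : ℕ) : hilb r s d ≤ (stdMon lead s d).card := by
  classical
  set I := Ideal.span (r '' (s : Set ι)) with hI
  set e : (σ →₀ ℕ) → MvPolynomial σ K ⧸ I :=
    fun m => Ideal.Quotient.mkₐ K I (aeval y (monomial m (1 : K))) with he
  have headd : ∀ a b, e (a + b) = e a * e b := by
    intro a b
    simp only [he, ← map_mul, monomial_mul, one_mul]
  set T := Submodule.span K (((stdMon lead s d).image e : Finset _) : Set (MvPolynomial σ K ⧸ I))
    with hT
  have main : ∀ N : ℕ, ∀ m : σ →₀ ℕ, Finsupp.weight w m = N → m.degree = d → e m ∈ T := by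
    intro N
    induction N using Nat.strong_induction_on with
    | _ N ih =>
      intro m hmN hmd
      by_cases hstd : ∀ i ∈ s, ¬ lead i ≤ m
      · exact Submodule.subset_span (Finset.mem_coe.2 (Finset.mem_image_of_mem _
          (mem_stdMon.2 ⟨hmd, hstd⟩)))
      · push Not at hstd
        obtain ⟨i, hi, hle⟩ := hstd
        have hm : m - lead i + lead i = m := tsub_add_cancel_of_le hle
        set m' := m - lead i
        have hr0 : Ideal.Quotient.mkₐ K I (r i) = 0 :=
          Ideal.Quotient.eq_zero_iff_mem.2 (Ideal.subset_span ⟨i, hi, rfl⟩)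
        have h1 : e (lead i) = Ideal.Quotient.mkₐ K I
            (aeval y (monomial (lead i) (1 : K)) - r i) := by
          rw [map_sub, hr0, sub_zero]
        rw [← hm, headd, h1]
        have hL : Submodule.span K {p | ∃ m : σ →₀ ℕ,
              (m.degree = 2 ∧ Finsupp.weight w m < Finsupp.weight w (lead i)) ∧
              p = aeval y (monomial m (1 : K))} ≤
            T.comap ((LinearMap.mulLeft K (e m')).comp (Ideal.Quotient.mkₐ K I).toLinearMap) := by
          rw [Submodule.span_le]
          rintro _ ⟨u, ⟨hu2, huw⟩, rfl⟩
          change e m' * e u ∈ T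
          rw [← headd]
          have hw : Finsupp.weight w (m' + u) < N := by
            rw [← hmN, ← hm, map_add, map_add]
            omega
          refine ih _ hw _ rfl ?_
          rw [← hmd, ← hm, map_add, map_add, hu2, hdeg]
        exact hL (hred i hi)
  have hle : (homogeneousSubmodule σ K d).map (Ideal.Quotient.mkₐ K I).toLinearMap ≤ T := by
    refine (Submodule.map_mono (homog_le_map_aeval hy d)).trans ?_
    rw [homog_eq_span, Submodule.map_span, Submodule.map_span, Submodule.span_le]
    rintro _ ⟨_, ⟨_, ⟨m, hm, rfl⟩, rfl⟩, rfl⟩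
    exact main _ m rfl hm
  have hfin : Module.Finite K T := Module.Finite.span_finset K _
  calc hilb r s d ≤ Module.finrank K T := Submodule.finrank_mono hle
    _ ≤ ((stdMon lead s d).image e).card := finrank_span_finset_le_card _
    _ ≤ _ := Finset.card_image_le

/-- With no relations every monomial is standard, and distinct monomials are independent. -/
lemma le_hilb_empty (r : ι → MvPolynomial σ K) (lead : ι → σ →₀ ℕ) (d : ℕ) :
    (stdMon lead ∅ d).card ≤ hilb r ∅ d := by
  classical
  have hinj : Function.Injective (Ideal.Quotient.mkₐ K
      (Ideal.span (r '' ((∅ : Finset ι) : Set ι)))).toLinearMap := by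
    rw [injective_iff_map_eq_zero]
    intro a ha
    have := Ideal.Quotient.eq_zero_iff_mem.1 ha
    simpa using this
  rw [hilb, ← LinearEquiv.finrank_eq (Submodule.equivMapOfInjective _ hinj _)]
  let b : stdMon lead ∅ d → homogeneousSubmodule σ K d :=
    fun m => ⟨monomial m.1 1, isHomogeneous_monomial 1 (mem_stdMon.1 m.2).1⟩
  have hb : LinearIndependent K b := by
    apply LinearIndependent.of_comp (homogeneousSubmodule σ K d).subtype
    have := (basisMonomials σ K).linearIndependent.comp
      (fun m : stdMon lead ∅ d => m.1) Subtype.val_injective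
    simpa [Function.comp_def, b] using this
  simpa using hb.fintype_card_le_finrank

/-- If, in suitable linear coordinates `y` and for a suitable weight, the leading monomials of the
quadrics `r i` are pairwise coprime, then the Hilbert function of the quotient is the one of the
monomial quotient. The two bounds `hilb_le` and `hilb_insert_ge` meet, by induction on the number of
quadrics. -/
lemma hilb_eq {r : ι → MvPolynomial σ K} (hr : ∀ i, (r i).IsHomogeneous 2)
    {lead : ι → σ →₀ ℕ} (hdeg : ∀ i, (lead i).degree = 2)
    (hdisj : ∀ i j, i ≠ j → Disjoint (lead i).support (lead j).support)
    {y : σ → MvPolynomial σ K}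
    (hy : ∀ j, (X j : MvPolynomial σ K) ∈ Submodule.span K (Set.range y)) (w : σ → ℕ)
    (s : Finset ι)
    (hred : ∀ i ∈ s, aeval y (monomial (lead i) (1 : K)) - r i ∈ Submodule.span K
      {p | ∃ m : σ →₀ ℕ, (m.degree = 2 ∧ Finsupp.weight w m < Finsupp.weight w (lead i)) ∧
        p = aeval y (monomial m (1 : K))}) :
    ∀ d, hilb r s d = (stdMon lead s d).card := by
  classical
  induction s using Finset.induction_on with
  | empty => exact fun d => le_antisymm (hilb_le hdeg hy w ∅ hred d) (le_hilb_empty r lead d)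
  | insert i s hi ih =>
    intro d
    have ih' := ih fun j hj => hred j (Finset.mem_insert_of_mem hj)
    refine le_antisymm (hilb_le hdeg hy w _ hred d) ?_
    have h1 := hilb_insert_ge hr s i d
    have h2 := card_stdMon_insert hdeg hdisj hi d
    simp only [ih'] at h1
    omega

end Upper

end General

/-! ### The quasimap relations in hyperbolic coordinates -/

section Quasimap

variable {k N₁ N₂ : ℕ}

/-- Linear coordinates in which the quadratic form `Σᵢ xᵢ²` on the first four directions is a sum
of two hyperbolic planes: `x₀ ± I x₁`, `x₂ ± I x₃`, and `xᵢ` for `i ≥ 4`. -/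
noncomputable def hypVar (k N₁ N₂ : ℕ) (v : Fin (k + 4) × QIdx N₁ N₂) :
    MvPolynomial (Fin (k + 4) × QIdx N₁ N₂) ℂ :=
  if v.1.val = 0 then X (⟨0, by omega⟩, v.2) + C Complex.I * X (⟨1, by omega⟩, v.2)
  else if v.1.val = 1 then X (⟨0, by omega⟩, v.2) - C Complex.I * X (⟨1, by omega⟩, v.2)
  else if v.1.val = 2 then X (⟨2, by omega⟩, v.2) + C Complex.I * X (⟨3, by omega⟩, v.2)
  else if v.1.val = 3 then X (⟨2, by omega⟩, v.2) - C Complex.I * X (⟨3, by omega⟩, v.2)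
  else X v

/-- The cost of a coordinate: leading monomials are those of least cost. The half-integer shifts on
the second hyperbolic plane make the cost of `y₀[s] y₁[t]` least at `s = t`, and that of
`y₂[s] y₃[t]` least at `t = s + 1`, among products with `s + t` fixed. -/
def cost (v : Fin (k + 4) × QIdx N₁ N₂) : ℤ :=
  if v.1.val ≤ 1 then 4 * (v.2 : ℤ) ^ 2
  else if v.1.val = 2 then (2 * (v.2 : ℤ) + 1) ^ 2
  else if v.1.val = 3 then (2 * (v.2 : ℤ) - 1) ^ 2
  else 4 * (v.2 : ℤ) ^ 2 + 4

lemma cost_of_four_le (i : Fin k) (s : QIdx N₁ N₂) :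
    cost ((⟨i.val + 4, by omega⟩ : Fin (k + 4)), s) = 4 * (s : ℤ) ^ 2 + 4 := by
  simp only [cost]
  rw [if_neg (by omega), if_neg (by omega), if_neg (by omega)]

/-- The weight of a coordinate: the cost subtracted from an upper bound of all costs. -/
def wt (v : Fin (k + 4) × QIdx N₁ N₂) : ℕ :=
  (4 * ((N₁ : ℤ) + N₂) ^ 2 + 4 * (N₁ + N₂) + 5 - cost v).toNat

lemma wt_cast (v : Fin (k + 4) × QIdx N₁ N₂) :
    (wt v : ℤ) = 4 * ((N₁ : ℤ) + N₂) ^ 2 + 4 * (N₁ + N₂) + 5 - cost v := by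
  apply Int.toNat_of_nonneg
  obtain ⟨j, s, hs⟩ := v
  rw [Finset.mem_Icc] at hs
  obtain ⟨h1, h2⟩ := hs
  have e1 : s ≤ (N₁ : ℤ) + N₂ := by omega
  have e2 : -((N₁ : ℤ) + N₂) ≤ s := by omega
  have e0 : 0 ≤ (N₁ : ℤ) + N₂ := by omega
  generalize (N₁ : ℤ) + N₂ = N at *
  simp only [cost]
  split_ifs <;> nlinarith

/-- The indices of the relations. -/
abbrev RIdx (N₁ N₂ : ℕ) := {l : ℤ // l ∈ Finset.Icc (-(2 * N₁ : ℤ)) (2 * N₂ : ℤ)}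

/-- The first variable of the leading monomial: `y₀[l/2]` for even `l`, `y₂[(l-1)/2]` for odd `l`
(integer division rounds down). -/
def leadL (k : ℕ) (l : RIdx N₁ N₂) : Fin (k + 4) × QIdx N₁ N₂ :=
  (⟨if l.1 % 2 = 0 then 0 else 2, by split_ifs <;> omega⟩,
    ⟨l.1 / 2, by have := Finset.mem_Icc.1 l.2; rw [Finset.mem_Icc]; omega⟩)

/-- The second variable of the leading monomial: `y₁[l/2]` for even `l`, `y₃[(l+1)/2]` for odd
`l`. -/
def leadR (k : ℕ) (l : RIdx N₁ N₂) : Fin (k + 4) × QIdx N₁ N₂ :=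
  (⟨if l.1 % 2 = 0 then 1 else 3, by split_ifs <;> omega⟩,
    ⟨(l.1 + 1) / 2, by have := Finset.mem_Icc.1 l.2; rw [Finset.mem_Icc]; omega⟩)

/-- The leading monomial of the relation `r[l]` in the coordinates `hypVar`. -/
noncomputable def leadMon (k : ℕ) (l : RIdx N₁ N₂) : Fin (k + 4) × QIdx N₁ N₂ →₀ ℕ :=
  Finsupp.single (leadL k l) 1 + Finsupp.single (leadR k l) 1

lemma leadMon_degree (l : RIdx N₁ N₂) : (leadMon k l).degree = 2 := by
  simp [leadMon, map_add]

lemma leadMon_disjoint (l l' : RIdx N₁ N₂) (h : l ≠ l') :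
    Disjoint (leadMon k l).support (leadMon k l').support := by
  have hsupp : ∀ (l : RIdx N₁ N₂) x, x ∈ (leadMon k l).support → x = leadL k l ∨ x = leadR k l := by
    intro l x hx
    have := Finsupp.support_add hx
    simpa [Finsupp.support_single] using this
  have hne : l.1 ≠ l'.1 := fun e => h (Subtype.ext e)
  rw [Finset.disjoint_left]
  intro x hx hx'
  rcases hsupp l x hx with h1 | h1 <;> rcases hsupp l' x hx' with h2 | h2 <;>
  · rw [h1] at h2
    have ha := congrArg (fun v => v.1.val) h2
    have hb := congrArg (fun v => (v.2 : ℤ)) h2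
    simp only [leadL, leadR] at ha hb
    split_ifs at ha <;> omega

lemma X_mem_span_hypVar (v : Fin (k + 4) × QIdx N₁ N₂) :
    (X v : MvPolynomial (Fin (k + 4) × QIdx N₁ N₂) ℂ) ∈
      Submodule.span ℂ (Set.range (hypVar k N₁ N₂)) := by
  obtain ⟨⟨j, hj⟩, s⟩ := v
  have hmem : ∀ v, hypVar k N₁ N₂ v ∈ Submodule.span ℂ (Set.range (hypVar k N₁ N₂)) :=
    fun v => Submodule.subset_span ⟨v, rfl⟩
  have hII : (C Complex.I * C Complex.I : MvPolynomial (Fin (k + 4) × QIdx N₁ N₂) ℂ) = -1 := by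
    rw [← C_mul, Complex.I_mul_I]; simp
  have h2 : (C (1 / 2) * 2 : MvPolynomial (Fin (k + 4) × QIdx N₁ N₂) ℂ) = 1 := by
    rw [show (2 : MvPolynomial (Fin (k + 4) × QIdx N₁ N₂) ℂ) = C 2 from rfl, ← C_mul]
    norm_num
  have y0 := hmem (⟨0, by omega⟩, s)
  have y1 := hmem (⟨1, by omega⟩, s)
  have y2 := hmem (⟨2, by omega⟩, s)
  have y3 := hmem (⟨3, by omega⟩, s)
  have re := fun {a b} ha hb => Submodule.smul_mem (Submodule.span ℂ (Set.range (hypVar k N₁ N₂)))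
    (1 / 2 : ℂ) (Submodule.add_mem _ (x := a) (y := b) ha hb)
  have im := fun {a b} ha hb => Submodule.smul_mem (Submodule.span ℂ (Set.range (hypVar k N₁ N₂)))
    (-Complex.I * (1 / 2) : ℂ) (Submodule.sub_mem _ (x := a) (y := b) ha hb)
  rcases (by omega : j = 0 ∨ j = 1 ∨ j = 2 ∨ j = 3 ∨ 4 ≤ j) with rfl | rfl | rfl | rfl | h4
  · convert re y0 y1 using 1
    simp only [hypVar, smul_eq_C_mul]
    norm_num only [if_true, if_false]
    linear_combination (-X (⟨0, hj⟩, s)) * h2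
  · convert im y0 y1 using 1
    simp only [hypVar, smul_eq_C_mul, C_mul, C_neg]
    norm_num only [if_true, if_false]
    linear_combination (-X (⟨1, hj⟩, s)) * h2 + (2 * C (1 / 2) * X (⟨1, hj⟩, s)) * hII
  · convert re y2 y3 using 1
    simp only [hypVar, smul_eq_C_mul]
    norm_num only [if_true, if_false]
    linear_combination (-X (⟨2, hj⟩, s)) * h2
  · convert im y2 y3 using 1
    simp only [hypVar, smul_eq_C_mul, C_mul, C_neg]
    norm_num only [if_true, if_false]
    linear_combination (-X (⟨3, hj⟩, s)) * h2 + (2 * C (1 / 2) * X (⟨3, hj⟩, s)) * hII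
  · convert hmem (⟨j, hj⟩, s) using 1
    simp only [hypVar]
    rw [if_neg (by omega), if_neg (by omega), if_neg (by omega), if_neg (by omega)]

/-- The relation in hyperbolic coordinates. The cross terms `x₁[p] x₀[q] - x₀[p] x₁[q]` cancel
because the sum is symmetric in `p` and `q`. -/
lemma qRel_eq (l : ℤ) : qRel (k + 4) N₁ N₂ l = ∑ p : QIdx N₁ N₂, ∑ q : QIdx N₁ N₂,
    if (p : ℤ) + (q : ℤ) = l then
      hypVar k N₁ N₂ (⟨0, by omega⟩, p) * hypVar k N₁ N₂ (⟨1, by omega⟩, q) +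
      hypVar k N₁ N₂ (⟨2, by omega⟩, p) * hypVar k N₁ N₂ (⟨3, by omega⟩, q) +
      ∑ i : Fin k, hypVar k N₁ N₂ (⟨i.val + 4, by omega⟩, p) *
        hypVar k N₁ N₂ (⟨i.val + 4, by omega⟩, q) else 0 := by
  have hII : (C Complex.I * C Complex.I : MvPolynomial (Fin (k + 4) × QIdx N₁ N₂) ℂ) = -1 := by
    rw [← C_mul, Complex.I_mul_I]; simp
  set G : QIdx N₁ N₂ → QIdx N₁ N₂ → MvPolynomial (Fin (k + 4) × QIdx N₁ N₂) ℂ := fun p q =>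
    if (p : ℤ) + (q : ℤ) = l then
      C Complex.I * (X (⟨1, by omega⟩, p) * X (⟨0, by omega⟩, q) +
        X (⟨3, by omega⟩, p) * X (⟨2, by omega⟩, q)) else 0 with hG
  have hsymm : ∑ p, ∑ q, (G p q - G q p) = 0 := by
    simp only [Finset.sum_sub_distrib]
    rw [Finset.sum_comm, sub_self]
  rw [qRel, ← add_zero (∑ p, _), ← hsymm, ← Finset.sum_add_distrib]
  refine Finset.sum_congr rfl fun p _ => ?_
  rw [← Finset.sum_add_distrib]
  refine Finset.sum_congr rfl fun q _ => ?_
  simp only [hG, add_comm (q : ℤ) (p : ℤ)]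
  split_ifs with h
  · rw [Fin.sum_univ_succ, Fin.sum_univ_succ, Fin.sum_univ_succ, Fin.sum_univ_succ]
    have hS : ∀ i : Fin k, ∀ p, hypVar k N₁ N₂ (⟨i.val + 4, by omega⟩, p) =
        X (i.succ.succ.succ.succ, p) := by
      intro i p
      simp only [hypVar]
      rw [if_neg (by omega), if_neg (by omega), if_neg (by omega), if_neg (by omega)]
      rfl
    simp only [hS]
    simp only [hypVar]
    norm_num only [if_true, if_false]
    have e0 : (0 : Fin (k + 4)) = ⟨0, by omega⟩ := rfl
    have e1 : (Fin.succ 0 : Fin (k + 4)) = ⟨1, by omega⟩ := rfl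
    have e2 : (Fin.succ (Fin.succ 0) : Fin (k + 4)) = ⟨2, by omega⟩ := rfl
    have e3 : (Fin.succ (Fin.succ (Fin.succ 0)) : Fin (k + 4)) = ⟨3, by omega⟩ := rfl
    rw [e1, e2, e3, e0]
    linear_combination (X (⟨1, by omega⟩, p) * X (⟨1, by omega⟩, q) +
      X (⟨3, by omega⟩, p) * X (⟨3, by omega⟩, q)) * hII
  · simp

lemma qRel_homog (n : ℕ) (l : ℤ) : (qRel n N₁ N₂ l).IsHomogeneous 2 := by
  refine IsHomogeneous.sum _ _ _ fun p _ => IsHomogeneous.sum _ _ _ fun q _ => ?_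
  split_ifs
  · exact IsHomogeneous.sum _ _ _ fun i _ => (isHomogeneous_X ℂ _).mul (isHomogeneous_X ℂ _)
  · exact isHomogeneous_zero _ _ _

/-- All terms of `r[l]` other than the leading one have strictly smaller weight. -/
lemma lead_sub_qRel_mem (l : RIdx N₁ N₂) :
    aeval (hypVar k N₁ N₂) (monomial (leadMon k l) (1 : ℂ)) - qRel (k + 4) N₁ N₂ l ∈
      Submodule.span ℂ {p | ∃ m : Fin (k + 4) × QIdx N₁ N₂ →₀ ℕ, (m.degree = 2 ∧
        Finsupp.weight wt m < Finsupp.weight wt (leadMon k l)) ∧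
        p = aeval (hypVar k N₁ N₂) (monomial m (1 : ℂ))} := by
  set L := Submodule.span ℂ {p | ∃ m : Fin (k + 4) × QIdx N₁ N₂ →₀ ℕ, (m.degree = 2 ∧
        Finsupp.weight wt m < Finsupp.weight wt (leadMon k l)) ∧
        p = aeval (hypVar k N₁ N₂) (monomial m (1 : ℂ))}
  have haev : ∀ u v, aeval (hypVar k N₁ N₂)
      (monomial (Finsupp.single u 1 + Finsupp.single v 1) (1 : ℂ)) =
        hypVar k N₁ N₂ u * hypVar k N₁ N₂ v := by
    intro u v
    rw [← one_mul (1 : ℂ), ← monomial_mul, map_mul]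
    change aeval (hypVar k N₁ N₂) (X u) * aeval (hypVar k N₁ N₂) (X v) = _
    rw [aeval_X, aeval_X]
  have hmem : ∀ u v, cost (leadL k l) + cost (leadR k l) < cost u + cost v →
      hypVar k N₁ N₂ u * hypVar k N₁ N₂ v ∈ L := by
    intro u v huv
    refine Submodule.subset_span
      ⟨Finsupp.single u 1 + Finsupp.single v 1, ⟨by simp [map_add], ?_⟩, (haev u v).symm⟩
    simp only [leadMon, map_add, Finsupp.weight_single, one_smul]
    have := wt_cast u
    have := wt_cast v
    have := wt_cast (leadL k l)
    have := wt_cast (leadR k l)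
    omega
  have hlead : aeval (hypVar k N₁ N₂) (monomial (leadMon k l) (1 : ℂ)) =
      ∑ p : QIdx N₁ N₂, ∑ q : QIdx N₁ N₂, if p = (leadL k l).2 ∧ q = (leadR k l).2 then
        hypVar k N₁ N₂ ((leadL k l).1, p) * hypVar k N₁ N₂ ((leadR k l).1, q) else 0 := by
    simp only [leadMon, haev, ite_and]
    simp
  rw [hlead, qRel_eq, ← Finset.sum_sub_distrib]
  refine Submodule.sum_mem _ fun p _ => ?_
  rw [← Finset.sum_sub_distrib]
  refine Submodule.sum_mem _ fun q _ => ?_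
  obtain ⟨l, hl⟩ := l
  obtain ⟨p, hp⟩ := p
  obtain ⟨q, hq⟩ := q
  by_cases hpq : p + q = l
  swap
  · rw [if_neg hpq, if_neg]
    · simp
    · simp only [leadL, leadR, Subtype.mk.injEq]
      omega
  rw [if_pos hpq]
  rcases Int.emod_two_eq_zero_or_one l with h0 | h1
  -- With `p = s + d`, `q = s - d` the costs exceed the leading cost `8 s²` by `8 d²` on the first
  -- plane, by `2 (2 d + 1)²` on the second, and by `8 d² + 8` on the remaining directions.
  · obtain ⟨s, rfl⟩ : ∃ s, l = 2 * s := ⟨l / 2, by omega⟩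
    obtain ⟨d, rfl⟩ : ∃ d, p = s + d := ⟨p - s, by ring⟩
    obtain rfl : q = s - d := by omega
    have hB : hypVar k N₁ N₂ (⟨2, by omega⟩, ⟨s + d, hp⟩) *
        hypVar k N₁ N₂ (⟨3, by omega⟩, ⟨s - d, hq⟩) ∈ L := by
      apply hmem
      have : 0 < (2 * d + 1) ^ 2 := by have : 2 * d + 1 ≠ 0 := by omega
                                       positivity
      simp only [cost, leadL, leadR, h0, if_true]
      norm_num
      rw [show (2 * s + 1) / 2 = s by omega]
      nlinarith
    have hC : ∀ i : Fin k, hypVar k N₁ N₂ (⟨i.val + 4, by omega⟩, ⟨s + d, hp⟩) *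
        hypVar k N₁ N₂ (⟨i.val + 4, by omega⟩, ⟨s - d, hq⟩) ∈ L := by
      intro i
      apply hmem
      rw [cost_of_four_le, cost_of_four_le]
      simp only [cost, leadL, leadR, h0, if_true]
      norm_num
      rw [show (2 * s + 1) / 2 = s by omega]
      nlinarith [sq_nonneg d]
    by_cases hd : d = 0
    · subst hd
      rw [if_pos (by simp only [leadL, leadR, Subtype.mk.injEq]; omega)]
      simp only [leadL, leadR, h0, if_true]
      rw [add_assoc, sub_add_cancel_left]
      exact Submodule.neg_mem _ (Submodule.add_mem _ hB (Submodule.sum_mem _ fun i _ => hC i))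
    · rw [if_neg (by simp only [leadL, leadR, Subtype.mk.injEq]; omega), zero_sub]
      refine Submodule.neg_mem _ (Submodule.add_mem _ (Submodule.add_mem _ ?_ hB)
        (Submodule.sum_mem _ fun i _ => hC i))
      apply hmem
      have : 0 < d ^ 2 := by positivity
      simp only [cost, leadL, leadR, h0, if_true]
      norm_num
      rw [show (2 * s + 1) / 2 = s by omega]
      nlinarith
  -- With `p = s + d`, `q = s + 1 - d` the excess over the leading cost `2 (2 s + 1)²` is
  -- `2 (2 d - 1)²` on the first plane, `8 d²` on the second, `2 (2 d - 1)² + 8` elsewhere.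
  · obtain ⟨s, rfl⟩ : ∃ s, l = 2 * s + 1 := ⟨l / 2, by omega⟩
    obtain ⟨d, rfl⟩ : ∃ d, p = s + d := ⟨p - s, by ring⟩
    obtain rfl : q = s + 1 - d := by omega
    have h0 : ¬ (2 * s + 1) % 2 = 0 := by omega
    have ediv : (2 * s + 1) / 2 = s := by omega
    have ediv' : (2 * s + 1 + 1) / 2 = s + 1 := by omega
    have hodd : 0 < (2 * d - 1) ^ 2 := by
      have : 2 * d - 1 ≠ 0 := by omega
      positivity
    have hA : hypVar k N₁ N₂ (⟨0, by omega⟩, ⟨s + d, hp⟩) *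
        hypVar k N₁ N₂ (⟨1, by omega⟩, ⟨s + 1 - d, hq⟩) ∈ L := by
      apply hmem
      simp only [cost, leadL, leadR, h0, if_false, ediv, ediv']
      norm_num
      nlinarith
    have hC : ∀ i : Fin k, hypVar k N₁ N₂ (⟨i.val + 4, by omega⟩, ⟨s + d, hp⟩) *
        hypVar k N₁ N₂ (⟨i.val + 4, by omega⟩, ⟨s + 1 - d, hq⟩) ∈ L := by
      intro i
      apply hmem
      rw [cost_of_four_le, cost_of_four_le]
      simp only [cost, leadL, leadR, h0, if_false, ediv, ediv']
      norm_num
      nlinarith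
    by_cases hd : d = 0
    · subst hd
      rw [if_pos (by simp only [leadL, leadR, Subtype.mk.injEq]; omega)]
      simp only [leadL, leadR, h0, if_false]
      rw [add_right_comm, sub_add_cancel_right]
      exact Submodule.neg_mem _ (Submodule.add_mem _ hA (Submodule.sum_mem _ fun i _ => hC i))
    · rw [if_neg (by simp only [leadL, leadR, Subtype.mk.injEq]; omega), zero_sub]
      refine Submodule.neg_mem _ (Submodule.add_mem _ (Submodule.add_mem _ hA ?_)
        (Submodule.sum_mem _ fun i _ => hC i))
      apply hmem
      have : 0 < d ^ 2 := by positivity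
      simp only [cost, leadL, leadR, h0, if_false, ediv, ediv']
      norm_num
      nlinarith

lemma qIdeal_eq (n N₁ N₂ : ℕ) : qIdeal n N₁ N₂ =
    Ideal.span ((fun l : RIdx N₁ N₂ => qRel n N₁ N₂ l) ''
      ((Finset.univ : Finset (RIdx N₁ N₂)) : Set (RIdx N₁ N₂))) := by
  rw [qIdeal]
  congr 1
  ext p
  constructor
  · rintro ⟨l, hl, rfl⟩
    exact ⟨⟨l, hl⟩, by simp, rfl⟩
  · rintro ⟨l, -, rfl⟩
    exact ⟨l.1, l.2, rfl⟩

end Quasimap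

/-- Setting `q = 1` in the bigraded Poincaré series: the Poincaré series (by
polynomial degree) of the quasimap algebra — the quotient of a polynomial ring
in `n(N₁+N₂+1)` variables by the `2(N₁+N₂)+1` quadrics `r[l]` — equals
`(1−t²)^{2(N₁+N₂)+1}/(1−t)^{n(N₁+N₂+1)}`, stated as the power-series identity
`(1−t²)^{2(N₁+N₂)+1} = (1−t)^{n(N₁+N₂+1)} · Σ_d dim(AQ_d) t^d`. -/
theorem stmt10 (n N₁ N₂ : ℕ) (hn : 5 ≤ n) :
    ((1 - PowerSeries.X ^ 2) ^ (2 * (N₁ + N₂) + 1) : PowerSeries ℤ) =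
      (1 - PowerSeries.X) ^ (n * (N₁ + N₂ + 1)) *
      PowerSeries.mk (fun d =>
        (Module.finrank ℂ
          ((MvPolynomial.homogeneousSubmodule (Fin n × QIdx N₁ N₂) ℂ d).map
            (Ideal.Quotient.mkₐ ℂ (qIdeal n N₁ N₂)).toLinearMap) : ℤ)) := by
  obtain ⟨k, rfl⟩ : ∃ k, n = k + 4 := ⟨n - 4, by omega⟩
  have hH := hilb_eq (fun l : RIdx N₁ N₂ => qRel_homog (k + 4) (l : ℤ))
    (leadMon_degree (k := k)) leadMon_disjoint X_mem_span_hypVar wt Finset.univ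
    (fun l _ => lead_sub_qRel_mem l)
  rw [qIdeal_eq]
  simp only [hilb] at hH
  simp only [hH]
  rw [mk_stdMon leadMon_degree leadMon_disjoint]
  have hcard : (k + 4) * (N₁ + N₂ + 1) = Fintype.card (Fin (k + 4) × QIdx N₁ N₂) := by
    simp only [Fintype.card_prod, Fintype.card_fin, Fintype.card_coe, Int.card_Icc]
    congr 1
    omega
  have hcard' : (Finset.univ : Finset (RIdx N₁ N₂)).card = 2 * (N₁ + N₂) + 1 := by
    simp only [Finset.card_univ, Fintype.card_coe, Int.card_Icc]
    omega
  rw [mul_left_comm, hcard, one_sub_pow_mul_stdMon_empty, mul_one, hcard']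
end

section
/- Let L be the two-step nilpotent graded Lie superalgebra with odd generators λⁱ[s] (1 ≤ i ≤ n, −N₁ ≤ s ≤ N₂) in degree 1, even central elements b[l] (−2N₁ ≤ l ≤ 2N₂) in degree 2, and brackets [λⁱ[s],λʲ[t]] = δ_{ij} b[s+t]. For n ≥ 3, the cohomology of the Chevalley–Eilenberg complex of L is concentrated in degree zero and equals the quasimap algebra AQ_{−N₁}^{N₂}(n) = ℂ[λⁱ[s]]/(r[l]), where r[l] = Σ_{s+t=l} Σᵢ λⁱ[s]λⁱ[t]. -/
/-!
Write the quadratic form as `x y + z² + …` and consider the `2(N₁ + N₂) + 1` relations `r[l]` as the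
coefficients of `x(t) y(t) + z(t)² + …`. For a suitable weight on the variables, strictly concave in
the mode, the terms of highest weight are the single monomials `z[s]²` of `r[2s]` and `x[s] y[s+1]`
of `r[2s+1]` (`qRel'_sub_mem`). No variable occurs in two of these monomials
(`eq_of_mem_support_lead`), so they are pairwise coprime and form a regular sequence
(`isRegular_monomial`). Three components are needed exactly to have `x`, `y` and `z` available.

Regularity passes from the leading monomials `m l` to the polynomials `f l` as follows
(`isRegular_of_coprime_leading`). Every monomial is uniquely a product of powers of the `m l` and a
monomial divisible by none of them. Replacing each `m l` in this product by `f l` defines a linear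
endomorphism `Φ` of the polynomial ring which is the identity up to terms of smaller weight, hence
bijective (`bijective_of_lower`), and which satisfies `Φ (m l * p) = f l * Φ p`
(`straighten_add`). So `Φ` identifies the module structures in which the `m l`, respectively the
`f l`, act by multiplication.
-/

open MvPolynomial

namespace StraightenedKoszul

/-! ### Polynomials with pairwise coprime leading monomials -/

section General

variable {σ ι R : Type*} [CommRing R]

/-- The polynomials all of whose monomials have `w`-weight smaller than `d`. -/
noncomputable def lowWeight (R : Type*) [CommRing R] (w : σ → ℕ) (d : ℕ) :
    Submodule R (MvPolynomial σ R) :=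
  restrictSupport R {u | Finsupp.weight w u < d}

lemma mem_lowWeight {w : σ → ℕ} {d : ℕ} {p : MvPolynomial σ R} :
    p ∈ lowWeight R w d ↔ ∀ u ∈ p.support, Finsupp.weight w u < d := Iff.rfl

lemma monomial_mem_lowWeight {w : σ → ℕ} {d : ℕ} {u : σ →₀ ℕ} (c : R)
    (h : Finsupp.weight w u < d) : monomial u c ∈ lowWeight R w d :=
  (monomial_mem_restrictSupport R).2 (Or.inl h)

lemma lowWeight_mono (w : σ → ℕ) {a b : ℕ} (h : a ≤ b) : lowWeight R w a ≤ lowWeight R w b :=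
  fun _ hp _ hu => lt_of_lt_of_le (hp hu) h

lemma mul_mem_lowWeight {w : σ → ℕ} {a b : ℕ} {p q : MvPolynomial σ R}
    (hp : p ∈ lowWeight R w (a + 1)) (hq : q ∈ lowWeight R w b) :
    p * q ∈ lowWeight R w (a + b) := by
  classical
  intro u hu
  obtain ⟨x, hx, y, hy, rfl⟩ := Finset.mem_add.1 (support_mul p q hu)
  have h1 : Finsupp.weight w x < a + 1 := hp hx
  have h2 : Finsupp.weight w y < b := hq hy
  change Finsupp.weight w (x + y) < a + b
  rw [map_add]
  omega

lemma exists_mem_lowWeight (w : σ → ℕ) (p : MvPolynomial σ R) : ∃ d, p ∈ lowWeight R w d :=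
  ⟨p.support.sup (Finsupp.weight w) + 1, fun _ hu =>
    Nat.lt_succ_of_le (Finset.le_sup (f := Finsupp.weight w) hu)⟩

lemma eq_zero_of_mem_lowWeight_zero {w : σ → ℕ} {p : MvPolynomial σ R}
    (h : p ∈ lowWeight R w 0) : p = 0 := by
  rw [← support_eq_empty, Finset.eq_empty_iff_forall_notMem]
  exact fun _ hu => absurd (h hu) (Nat.not_lt_zero _)

/-- A linear map that changes every monomial only by terms of smaller weight is bijective. -/
lemma bijective_of_lower (w : σ → ℕ) (Φ : MvPolynomial σ R →ₗ[R] MvPolynomial σ R)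
    (h : ∀ u, Φ (monomial u 1) - monomial u 1 ∈ lowWeight R w (Finsupp.weight w u)) :
    Function.Bijective Φ := by
  have key : ∀ d, ∀ p ∈ lowWeight R w (d + 1), Φ p - p ∈ lowWeight R w d := by
    intro d
    suffices lowWeight R w (d + 1) ≤ (lowWeight R w d).comap (Φ - LinearMap.id) from
      fun p hp => this hp
    rw [lowWeight, restrictSupport_eq_span, Submodule.span_le]
    rintro _ ⟨u, hu, rfl⟩
    exact lowWeight_mono w (Nat.lt_succ_iff.1 hu) (h u)
  constructor
  · rw [injective_iff_map_eq_zero]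
    intro p hp
    obtain ⟨d, hd⟩ := exists_mem_lowWeight w p
    induction d with
    | zero => exact eq_zero_of_mem_lowWeight_zero hd
    | succ d ih =>
      have := key d p hd
      rw [hp, zero_sub] at this
      exact ih (by simpa using (lowWeight R w d).neg_mem this)
  · intro p
    obtain ⟨d, hd⟩ := exists_mem_lowWeight w p
    induction d generalizing p with
    | zero => exact ⟨0, by rw [map_zero, eq_zero_of_mem_lowWeight_zero hd]⟩
    | succ d ih =>
      obtain ⟨q, hq⟩ := ih _ (key d p hd)
      exact ⟨p - q, by rw [map_sub, hq, sub_sub_cancel]⟩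

open Classical in
/-- Straightened form of the monomial `u`: divide by one of the monomials `m l`, `l ∈ L`,
as long as possible, replacing every factor `m l` removed by the polynomial `f l`. The choice of
the divisor does not matter when the `m l` are pairwise coprime (`straighten_add`). -/
noncomputable def straighten (f : ι → MvPolynomial σ R) (m : ι → σ →₀ ℕ) (L : List ι)
    (u : σ →₀ ℕ) : MvPolynomial σ R :=
  if h : ∃ l ∈ L, m l ≤ u ∧ m l ≠ 0 then
    f h.choose * straighten f m L (u - m h.choose)
  else monomial u 1
termination_by u.degree
decreasing_by
  obtain ⟨-, h1, h2⟩ := h.choose_spec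
  have h3 : (m h.choose).degree ≠ 0 := by rwa [Ne, Finsupp.degree_eq_zero_iff]
  have h4 : (m h.choose + (u - m h.choose)).degree = u.degree := by
    rw [add_tsub_cancel_of_le h1]
  rw [map_add] at h4
  omega

lemma straighten_cases (f : ι → MvPolynomial σ R) (m : ι → σ →₀ ℕ) (L : List ι) (u : σ →₀ ℕ) :
    (∃ l ∈ L, m l ≤ u ∧ m l ≠ 0 ∧ straighten f m L u = f l * straighten f m L (u - m l)) ∨
      ((¬ ∃ l ∈ L, m l ≤ u ∧ m l ≠ 0) ∧ straighten f m L u = monomial u 1) := by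
  by_cases h : ∃ l ∈ L, m l ≤ u ∧ m l ≠ 0
  · obtain ⟨h0, h1, h2⟩ := h.choose_spec
    exact Or.inl ⟨h.choose, h0, h1, h2, by rw [straighten, dif_pos h]⟩
  · exact Or.inr ⟨h, by rw [straighten, dif_neg h]⟩

lemma degree_sub_lt {a u : σ →₀ ℕ} (h1 : a ≤ u) (h2 : a ≠ 0) : (u - a).degree < u.degree := by
  have h3 : a.degree ≠ 0 := by rwa [Ne, Finsupp.degree_eq_zero_iff]
  have h4 : (a + (u - a)).degree = u.degree := by rw [add_tsub_cancel_of_le h1]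
  rw [map_add] at h4
  omega

lemma le_of_le_add_of_disjoint {a b u : σ →₀ ℕ} (hab : Disjoint a.support b.support)
    (h : a ≤ b + u) : a ≤ u := by
  intro x
  have hx := h x
  by_cases ha : a x = 0
  · rw [ha]; exact Nat.zero_le _
  · have hb : b x = 0 := by
      by_contra hb
      exact Finset.disjoint_left.1 hab (Finsupp.mem_support_iff.2 ha) (Finsupp.mem_support_iff.2 hb)
    simpa [hb] using hx

/-- Straightening turns multiplication by the monomial `m k` into multiplication by `f k`. -/
lemma straighten_add (f : ι → MvPolynomial σ R) (m : ι → σ →₀ ℕ) (L : List ι)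
    (hm0 : ∀ l ∈ L, m l ≠ 0)
    (hdisj : ∀ k ∈ L, ∀ l ∈ L, k ≠ l → Disjoint (m k).support (m l).support)
    (u : σ →₀ ℕ) : ∀ k ∈ L, straighten f m L (m k + u) = f k * straighten f m L u := by
  induction hd : u.degree using Nat.strong_induction_on generalizing u with
  | _ d ih =>
    subst hd
    intro k hk
    rcases straighten_cases f m L (m k + u) with ⟨l, hl, h1, h2, h3⟩ | ⟨h, -⟩
    · rw [h3]
      by_cases hlk : l = k
      · subst hlk
        rw [add_tsub_cancel_left]
      · have hlu : m l ≤ u := le_of_le_add_of_disjoint (hdisj l hl k hk hlk) h1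
        have ih' := ih _ (degree_sub_lt hlu h2) (u - m l) rfl
        rw [add_tsub_assoc_of_le hlu, ih' k hk]
        conv_rhs => rw [← add_tsub_cancel_of_le hlu, ih' l hl]
        ring
    · exact absurd ⟨k, hk, le_self_add, hm0 k hk⟩ h

lemma straighten_sub_mem (w : σ → ℕ) (f : ι → MvPolynomial σ R) (m : ι → σ →₀ ℕ) (L : List ι)
    (hf : ∀ l ∈ L, f l - monomial (m l) 1 ∈ lowWeight R w (Finsupp.weight w (m l)))
    (u : σ →₀ ℕ) :
    straighten f m L u - monomial u 1 ∈ lowWeight R w (Finsupp.weight w u) := by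
  induction hd : u.degree using Nat.strong_induction_on generalizing u with
  | _ d ih =>
    subst hd
    rcases straighten_cases f m L u with ⟨l, hl, h1, h2, h3⟩ | ⟨-, h⟩
    · obtain ⟨v, rfl⟩ := le_iff_exists_add.1 h1
      have ih' := ih _ (degree_sub_lt h1 h2) _ rfl
      rw [add_tsub_cancel_left] at h3 ih'
      have hfl : f l ∈ lowWeight R w (Finsupp.weight w (m l) + 1) := by
        rw [← sub_add_cancel (f l) (monomial (m l) 1)]
        exact add_mem (lowWeight_mono w (Nat.le_succ _) (hf l hl))
          (monomial_mem_lowWeight 1 (Nat.lt_succ_self _))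
      have e : straighten f m L (m l + v) - monomial (m l + v) 1 =
          f l * (straighten f m L v - monomial v 1) +
            monomial v 1 * (f l - monomial (m l) 1) := by
        have : (monomial (m l + v) 1 : MvPolynomial σ R) = monomial (m l) 1 * monomial v 1 := by
          rw [monomial_mul, one_mul]
        rw [h3, this]
        ring
      rw [e, map_add]
      refine add_mem (mul_mem_lowWeight hfl ih') ?_
      rw [add_comm]
      exact mul_mem_lowWeight (monomial_mem_lowWeight 1 (Nat.lt_succ_self _)) (hf l hl)
    · rw [h, sub_self]
      exact zero_mem _

lemma ofList_monomial (m : ι → σ →₀ ℕ) (L : List ι) :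
    Ideal.ofList (L.map fun l => (monomial (m l) (1 : R))) =
      Ideal.span ((fun s => monomial s (1 : R)) '' (m '' {l | l ∈ L})) := by
  refine congrArg Ideal.span (Set.ext fun x => ?_)
  simp

/-- Pairwise coprime nonconstant monomials form a regular sequence. -/
lemma isRegular_monomial [Nontrivial R] (m : ι → σ →₀ ℕ) (L : List ι) (hL : L.Nodup)
    (hm0 : ∀ l ∈ L, m l ≠ 0)
    (hdisj : ∀ k ∈ L, ∀ l ∈ L, k ≠ l → Disjoint (m k).support (m l).support) :
    RingTheory.Sequence.IsRegular (MvPolynomial σ R)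
      (L.map fun l => (monomial (m l) (1 : R))) := by
  classical
  refine ⟨⟨fun i hi => ?_⟩, fun htop => ?_⟩
  · rw [isSMulRegular_quotient_iff_mem_of_smul_mem]
    intro p hp
    have hi' : i < L.length := by simpa using hi
    rw [← List.map_take, ofList_monomial, smul_eq_mul, Ideal.mul_top,
      mem_ideal_span_monomial_image] at hp ⊢
    intro u hu
    have hu' : m L[i] + u ∈ ((L.map fun l => (monomial (m l) (1 : R)))[i] • p).support := by
      rw [List.getElem_map, smul_eq_mul, mem_support_iff, coeff_monomial_mul, one_mul]
      exact mem_support_iff.1 hu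
    obtain ⟨_, ⟨l, hl, rfl⟩, hle⟩ := hp _ hu'
    refine ⟨m l, ⟨l, hl, rfl⟩, le_of_le_add_of_disjoint
      (hdisj _ (List.mem_of_mem_take hl) _ (List.getElem_mem hi') ?_) hle⟩
    rintro rfl
    obtain ⟨j, hj, hj'⟩ := List.getElem_of_mem hl
    rw [List.getElem_take, hL.getElem_inj_iff] at hj'
    simp at hj
    omega
  · have h1 : (1 : MvPolynomial σ R) ∈
        Ideal.ofList (L.map fun l => (monomial (m l) (1 : R))) • (⊤ : Ideal _) := by
      rw [← htop]; trivial
    rw [ofList_monomial, smul_eq_mul, Ideal.mul_top, mem_ideal_span_monomial_image] at h1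
    obtain ⟨_, ⟨l, hl, rfl⟩, hle⟩ := h1 0 (by simp)
    exact hm0 l hl (le_antisymm hle zero_le)

/-- Polynomials whose leading terms, with respect to a weight, are pairwise coprime nonconstant
monomials form a regular sequence: straightening is a linear automorphism of the polynomial ring
carrying multiplication by the leading monomials to multiplication by the polynomials. -/
theorem isRegular_of_coprime_leading [Nontrivial R] (w : σ → ℕ) (f : ι → MvPolynomial σ R)
    (m : ι → σ →₀ ℕ) (L : List ι) (hL : L.Nodup) (hm0 : ∀ l ∈ L, m l ≠ 0)
    (hdisj : ∀ k ∈ L, ∀ l ∈ L, k ≠ l → Disjoint (m k).support (m l).support)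
    (hf : ∀ l ∈ L, f l - monomial (m l) 1 ∈ lowWeight R w (Finsupp.weight w (m l))) :
    RingTheory.Sequence.IsRegular (MvPolynomial σ R) (L.map f) := by
  let Φ : MvPolynomial σ R →ₗ[R] MvPolynomial σ R :=
    (basisMonomials σ R).constr R (straighten f m L)
  have hΦ (u) : Φ (monomial u 1) = straighten f m L u := by
    rw [show (monomial u 1 : MvPolynomial σ R) = basisMonomials σ R u from
      (congrFun (coe_basisMonomials σ R) u).symm]
    exact (basisMonomials σ R).constr_basis R _ u
  have hbij : Function.Bijective Φ := bijective_of_lower w Φ fun u => by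
    rw [hΦ]; exact straighten_sub_mem w f m L hf u
  have hmul : ∀ k ∈ L, ∀ p, Φ (monomial (m k) 1 * p) = f k * Φ p := by
    intro k hk p
    have : Φ ∘ₗ LinearMap.mulLeft R (monomial (m k) 1) = LinearMap.mulLeft R (f k) ∘ₗ Φ := by
      refine (basisMonomials σ R).ext fun u => ?_
      simp [hΦ, monomial_mul, straighten_add f m L hm0 hdisj u k hk]
    exact LinearMap.congr_fun this p
  refine ((LinearEquiv.ofBijective Φ hbij).toAddEquiv.isRegular_congr ?_).1
    (isRegular_monomial m L hL hm0 hdisj)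
  rw [List.forall₂_map_left_iff, List.forall₂_map_right_iff, List.forall₂_same]
  exact fun k hk p => hmul k hk p

end General
/-! ### Leading monomials of the quasimap relations -/

section Quasimap

variable {N₁ N₂ : ℕ}

/-- The mode `k` as an element of the index set, with the junk value `0` when `k` is out of
range. -/
noncomputable def mode (N₁ N₂ : ℕ) (k : ℤ) : QIdx N₁ N₂ :=
  if h : k ∈ Finset.Icc (-(N₁ : ℤ)) (N₂ : ℤ) then ⟨k, h⟩
  else ⟨0, Finset.mem_Icc.2 ⟨by omega, by omega⟩⟩

lemma coe_mode {k : ℤ} (h1 : -(N₁ : ℤ) ≤ k) (h2 : k ≤ N₂) : (mode N₁ N₂ k : ℤ) = k := by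
  rw [mode, dif_pos (Finset.mem_Icc.2 ⟨h1, h2⟩)]

/-- Integer version of the weight: strictly concave in the mode, with linear corrections that make
`x[s] y[s+1]` dominate `r[2s+1]` and `z[s]²` dominate `r[2s]`; the components beyond `x, y, z` are
lowered by one so that they never lead. The constant makes all weights nonnegative. -/
noncomputable def wtZ (N₁ N₂ k : ℕ) (v : Fin (k + 3) × QIdx N₁ N₂) : ℤ :=
  2 * ((N₁ + N₂ : ℕ) : ℤ) ^ 2 + 2 * ((N₁ + N₂ : ℕ) : ℤ) + 1 - 2 * (v.2 : ℤ) ^ 2 +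
    (if v.1 = 0 then -2 * (v.2 : ℤ) else if v.1 = 1 then 2 * (v.2 : ℤ) - 1
      else if v.1 = 2 then 0 else -1)

/-- The weight of a variable, as a natural number; no truncation occurs (`coe_wt`). -/
noncomputable def wt (N₁ N₂ k : ℕ) (v : Fin (k + 3) × QIdx N₁ N₂) : ℕ := (wtZ N₁ N₂ k v).toNat

lemma coe_wt (k : ℕ) (v : Fin (k + 3) × QIdx N₁ N₂) : (wt N₁ N₂ k v : ℤ) = wtZ N₁ N₂ k v := by
  refine Int.toNat_of_nonneg ?_
  obtain ⟨i, s, hs⟩ := v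
  rw [Finset.mem_Icc] at hs
  have h1 : s ≤ ((N₁ + N₂ : ℕ) : ℤ) := by push_cast; omega
  have h2 : -((N₁ + N₂ : ℕ) : ℤ) ≤ s := by push_cast; omega
  unfold wtZ
  generalize ((N₁ + N₂ : ℕ) : ℤ) = M at h1 h2
  have h3 : s ^ 2 ≤ M ^ 2 := sq_le_sq' h2 h1
  dsimp only
  split_ifs <;> linarith

/-- The leading monomial of `r[l]`: `z[s]²` for `l = 2s`, and `x[s] y[s+1]` for `l = 2s+1`, where
`x, y, z` are the components `0, 1, 2`. -/
noncomputable def lead (N₁ N₂ k : ℕ) (l : ℤ) : Fin (k + 3) × QIdx N₁ N₂ →₀ ℕ :=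
  Finsupp.single (if Even l then 2 else 0, mode N₁ N₂ (l / 2)) 1 +
    Finsupp.single (if Even l then 2 else 1, mode N₁ N₂ (l - l / 2)) 1

lemma fin_two_eq (k : ℕ) : (2 : Fin (k + 3)) = (0 : Fin (k + 1)).succ.succ :=
  Fin.ext (Nat.mod_eq_of_lt (show 2 < k + 3 by omega))

lemma fin_two_ne_zero (k : ℕ) : (2 : Fin (k + 3)) ≠ 0 :=
  fin_two_eq k ▸ Fin.succ_ne_zero _

lemma fin_succ_succ_ne_one {k : ℕ} (j : Fin (k + 1)) : (j.succ.succ : Fin (k + 3)) ≠ 1 :=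
  fun h => Fin.succ_ne_zero j (Fin.succ_injective _ (h.trans Fin.succ_zero_eq_one.symm))

lemma fin_two_ne_one (k : ℕ) : (2 : Fin (k + 3)) ≠ 1 :=
  fin_two_eq k ▸ fin_succ_succ_ne_one _

lemma lead_ne_zero (k : ℕ) (l : ℤ) : lead N₁ N₂ k l ≠ 0 := by
  intro h
  have := congrArg Finsupp.degree h
  simp [lead] at this

/-- Every variable occurs in at most one leading monomial. -/
lemma eq_of_mem_support_lead (k : ℕ) {l : ℤ} (h1 : -(2 * N₁ : ℤ) ≤ l) (h2 : l ≤ 2 * N₂)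
    {v : Fin (k + 3) × QIdx N₁ N₂} (hv : v ∈ (lead N₁ N₂ k l).support) :
    l = 2 * (v.2 : ℤ) + (if v.1 = 0 then 1 else if v.1 = 1 then -1 else 0) := by
  classical
  have e20 := fin_two_ne_zero k
  have e21 := fin_two_ne_one k
  have e10 : (1 : Fin (k + 3)) ≠ 0 := by simp
  have hm : (mode N₁ N₂ (l / 2) : ℤ) = l / 2 := coe_mode (by omega) (by omega)
  have hm' : (mode N₁ N₂ (l - l / 2) : ℤ) = l - l / 2 := coe_mode (by omega) (by omega)
  have := Finsupp.support_add hv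
  rw [Finset.mem_union, Finsupp.support_single _ one_ne_zero,
    Finsupp.support_single _ one_ne_zero, Finset.mem_singleton, Finset.mem_singleton] at this
  rcases Int.even_or_odd l with he | ho
  · rw [if_pos he, if_pos he] at this
    have he' := Int.even_iff.1 he
    rcases this with rfl | rfl
    · rw [if_neg e20, if_neg e21, hm]; omega
    · rw [if_neg e20, if_neg e21, hm']; omega
  · have ho' := Int.odd_iff.1 ho
    rw [← Int.not_even_iff_odd] at ho
    rw [if_neg ho, if_neg ho] at this
    rcases this with rfl | rfl
    · rw [if_pos rfl, hm]; omega
    · rw [if_neg e10, if_pos rfl, hm']; omega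

/-- The summand of `r[p+q]` in the coordinates `x, y, z, …`, where the quadratic form reads
`x y + z² + …`. -/
noncomputable def summand (N₁ N₂ k : ℕ) (p q : QIdx N₁ N₂) :
    MvPolynomial (Fin (k + 3) × QIdx N₁ N₂) ℂ :=
  X (0, p) * X (1, q) + ∑ j : Fin (k + 1), X (j.succ.succ, p) * X (j.succ.succ, q)

/-- The relation `r[l]` in the coordinates `x, y, z, …`. -/
noncomputable def qRel' (N₁ N₂ k : ℕ) (l : ℤ) : MvPolynomial (Fin (k + 3) × QIdx N₁ N₂) ℂ :=
  ∑ p : QIdx N₁ N₂, ∑ q : QIdx N₁ N₂, if (p : ℤ) + (q : ℤ) = l then summand N₁ N₂ k p q else 0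

lemma X_mul_X (k : ℕ) (a b : Fin (k + 3) × QIdx N₁ N₂) :
    (X a * X b : MvPolynomial _ ℂ) = monomial (Finsupp.single a 1 + Finsupp.single b 1) 1 := by
  rw [X, X, monomial_mul, one_mul]

lemma X_mul_X_mem (k : ℕ) {a b : Fin (k + 3) × QIdx N₁ N₂} {d : ℕ}
    (h : wtZ N₁ N₂ k a + wtZ N₁ N₂ k b < d) :
    (X a * X b : MvPolynomial _ ℂ) ∈ lowWeight ℂ (wt N₁ N₂ k) d := by
  rw [X_mul_X]
  refine monomial_mem_lowWeight 1 ?_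
  rw [← coe_wt, ← coe_wt] at h
  simp only [map_add, Finsupp.weight_single, one_smul]
  exact_mod_cast h

/-- The leading monomial of `r[l]` has weight `2 C - l ^ 2`, where `C` is the constant term in
the definition of `wtZ`. -/
lemma weight_lead (k : ℕ) {l : ℤ} (h1 : -(2 * N₁ : ℤ) ≤ l) (h2 : l ≤ 2 * N₂) :
    ((Finsupp.weight (wt N₁ N₂ k) (lead N₁ N₂ k l) : ℕ) : ℤ) =
      2 * (2 * ((N₁ + N₂ : ℕ) : ℤ) ^ 2 + 2 * ((N₁ + N₂ : ℕ) : ℤ) + 1) - l ^ 2 := by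
  have e20 := fin_two_ne_zero k
  have e21 := fin_two_ne_one k
  have e10 : (1 : Fin (k + 3)) ≠ 0 := by simp
  have hm : (mode N₁ N₂ (l / 2) : ℤ) = l / 2 := coe_mode (by omega) (by omega)
  have hm' : (mode N₁ N₂ (l - l / 2) : ℤ) = l - l / 2 := coe_mode (by omega) (by omega)
  simp only [lead, map_add, Finsupp.weight_single, one_smul, Nat.cast_add (R := ℤ), coe_wt]
  unfold wtZ
  rcases Int.even_or_odd l with he | ho
  · rw [if_pos he, if_pos he]
    dsimp only
    rw [if_neg e20, if_neg e20, if_neg e21, if_neg e21, if_pos rfl, hm, hm']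
    obtain ⟨s, rfl⟩ := he
    rw [show (s + s) / 2 = s by omega]
    push_cast
    ring
  · rw [← Int.not_even_iff_odd] at ho
    rw [if_neg ho, if_neg ho]
    rw [Int.not_even_iff_odd] at ho
    obtain ⟨s, rfl⟩ := ho
    dsimp only
    rw [if_pos rfl, if_neg e10, if_pos rfl, hm, hm', show (2 * s + 1) / 2 = s by omega]
    push_cast
    ring

/-- Apart from its leading monomial, `r[l]` has only terms of smaller weight. For modes with
`p + q = l` this follows from `2 p² + 2 q² = l² + (p - q)²`: up to a constant, `z[p] z[q]` has
weight `-l² - (p - q)²` and `x[p] y[q]` has weight `-l² - (p - q + 1)²`, while the leading monomial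
has weight `-l²`. -/
lemma qRel'_sub_mem (k : ℕ) {l : ℤ} (h1 : -(2 * N₁ : ℤ) ≤ l) (h2 : l ≤ 2 * N₂) :
    qRel' N₁ N₂ k l - monomial (lead N₁ N₂ k l) 1 ∈
      lowWeight ℂ (wt N₁ N₂ k) (Finsupp.weight (wt N₁ N₂ k) (lead N₁ N₂ k l)) := by
  have e20 := fin_two_ne_zero k
  have e21 := fin_two_ne_one k
  have e10 : (1 : Fin (k + 3)) ≠ 0 := by simp
  have hm : (mode N₁ N₂ (l / 2) : ℤ) = l / 2 := coe_mode (by omega) (by omega)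
  have hm' : (mode N₁ N₂ (l - l / 2) : ℤ) = l - l / 2 := coe_mode (by omega) (by omega)
  have hw := weight_lead k h1 h2
  generalize Finsupp.weight (wt N₁ N₂ k) (lead N₁ N₂ k l) = d at hw
  have hmono : (monomial (lead N₁ N₂ k l) 1 : MvPolynomial _ ℂ) =
      ∑ p : QIdx N₁ N₂, ∑ q : QIdx N₁ N₂, if (p : ℤ) + (q : ℤ) = l then
        (if (p : ℤ) = l / 2 then monomial (lead N₁ N₂ k l) 1 else 0) else 0 := by
    rw [Finset.sum_eq_single (mode N₁ N₂ (l / 2)), Finset.sum_eq_single (mode N₁ N₂ (l - l / 2)),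
      if_pos (by rw [hm, hm']; ring), if_pos hm]
    · intro q _ hq
      refine if_neg fun h => hq (Subtype.ext ?_)
      rw [hm'] ; omega
    · simp
    · intro p _ hp
      refine Finset.sum_eq_zero fun q _ => ?_
      have : ¬ (p : ℤ) = l / 2 := fun h => hp (Subtype.ext (h.trans hm.symm))
      rw [if_neg this, ite_self]
    · simp
  rw [hmono, qRel', ← Finset.sum_sub_distrib]
  refine sum_mem fun p _ => ?_
  rw [← Finset.sum_sub_distrib]
  refine sum_mem fun q _ => ?_
  by_cases hpq : (p : ℤ) + (q : ℤ) = l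
  swap
  · rw [if_neg hpq, if_neg hpq, sub_zero]; exact zero_mem _
  rw [if_pos hpq, if_pos hpq]
  -- The mixed term `x[p] y[q]` is of lower weight unless `q = p + 1`.
  have hxy : (q : ℤ) ≠ p + 1 → (X (0, p) * X (1, q) : MvPolynomial (Fin (k + 3) × _) ℂ) ∈
      lowWeight ℂ (wt N₁ N₂ k) d := by
    intro h
    refine X_mul_X_mem k ?_
    rw [hw, ← hpq]
    simp only [wtZ, if_true, if_neg e10]
    have h0 : 0 < ((q : ℤ) - p - 1) ^ 2 := by
      have : (q : ℤ) - p - 1 ≠ 0 := by omega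
      positivity
    nlinarith
  -- The term `z[p] z[q]` is of lower weight unless `p = q`.
  have hzz : (p : ℤ) ≠ q → (X (2, p) * X (2, q) : MvPolynomial (Fin (k + 3) × _) ℂ) ∈
      lowWeight ℂ (wt N₁ N₂ k) d := by
    intro h
    refine X_mul_X_mem k ?_
    rw [hw, ← hpq]
    simp only [wtZ, if_true, if_neg e20, if_neg e21]
    have h0 : 0 < ((p : ℤ) - q) ^ 2 := by
      have : (p : ℤ) - q ≠ 0 := by omega
      positivity
    nlinarith
  have hrest : ∀ j : Fin k, (X (j.succ.succ.succ, p) * X (j.succ.succ.succ, q) :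
      MvPolynomial (Fin (k + 3) × _) ℂ) ∈ lowWeight ℂ (wt N₁ N₂ k) d := by
    intro j
    refine X_mul_X_mem k ?_
    have j0 : j.succ.succ.succ ≠ 0 := Fin.succ_ne_zero _
    have j1 : j.succ.succ.succ ≠ 1 := fin_succ_succ_ne_one _
    have j2 : j.succ.succ.succ ≠ 2 := fun h => Fin.succ_ne_zero j
      (Fin.succ_injective _ (Fin.succ_injective _ (h.trans (fin_two_eq k))))
    rw [hw, ← hpq]
    simp only [wtZ, if_neg j0, if_neg j1, if_neg j2]
    nlinarith [sq_nonneg ((p : ℤ) - q)]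
  have hterm : summand N₁ N₂ k p q = X (0, p) * X (1, q) + X (2, p) * X (2, q) +
      ∑ j : Fin k, X (j.succ.succ.succ, p) * X (j.succ.succ.succ, q) := by
    rw [summand, Fin.sum_univ_succ, ← add_assoc (X (0, p) * X (1, q)), ← fin_two_eq]
  have hS := sum_mem (t := Finset.univ) fun j (_ : j ∈ Finset.univ) => hrest j
  rw [hterm]
  by_cases hp : (p : ℤ) = l / 2
  · have hp' : mode N₁ N₂ (l / 2) = p := Subtype.ext (hm.trans hp.symm)
    have hq' : mode N₁ N₂ (l - l / 2) = q := Subtype.ext (hm'.trans (by omega))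
    rw [if_pos hp, lead, hp', hq', ← X_mul_X]
    by_cases he : Even l
    · have := Int.even_iff.1 he
      rw [if_pos he, if_pos he, add_right_comm, add_sub_cancel_right]
      exact add_mem (hxy (by omega)) hS
    · have := Int.odd_iff.1 (Int.not_even_iff_odd.1 he)
      rw [if_neg he, if_neg he, add_assoc, add_sub_cancel_left]
      exact add_mem (hzz (by omega)) hS
  · rw [if_neg hp, sub_zero]
    exact add_mem (add_mem (hxy (by omega)) (hzz (by omega))) hS

/-! ### Change of coordinates -/

/-- The substitution `λ⁰ = x + y/4`, `λ¹ = i (x - y/4)` turning `(λ⁰)² + (λ¹)²` into `x y`. -/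
noncomputable def toLightCone (N₁ N₂ k : ℕ) : MvPolynomial (Fin (k + 3) × QIdx N₁ N₂) ℂ →ₐ[ℂ]
    MvPolynomial (Fin (k + 3) × QIdx N₁ N₂) ℂ :=
  aeval fun v => if v.1 = 0 then X (0, v.2) + C (1 / 4) * X (1, v.2)
    else if v.1 = 1 then C Complex.I * (X (0, v.2) - C (1 / 4) * X (1, v.2)) else X v

/-- The inverse substitution `x = (λ⁰ - i λ¹) / 2`, `y = 2 (λ⁰ + i λ¹)`. -/
noncomputable def ofLightCone (N₁ N₂ k : ℕ) : MvPolynomial (Fin (k + 3) × QIdx N₁ N₂) ℂ →ₐ[ℂ]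
    MvPolynomial (Fin (k + 3) × QIdx N₁ N₂) ℂ :=
  aeval fun v => if v.1 = 0 then C (1 / 2) * (X (0, v.2) - C Complex.I * X (1, v.2))
    else if v.1 = 1 then C 2 * (X (0, v.2) + C Complex.I * X (1, v.2)) else X v

lemma C_I_mul_self {τ : Type*} : (C Complex.I * C Complex.I : MvPolynomial τ ℂ) = -1 := by
  rw [← C_mul, Complex.I_mul_I, C_neg, C_1]

lemma C_two_eq {τ : Type*} : (C 2 : MvPolynomial τ ℂ) = 2 := map_ofNat C 2

lemma C_half {τ : Type*} : (C (1 / 2) : MvPolynomial τ ℂ) * 2 = 1 := by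
  rw [← C_two_eq, ← C_mul]; norm_num

lemma C_quarter {τ : Type*} : (C (1 / 4) : MvPolynomial τ ℂ) * 4 = 1 := by
  rw [show (4 : MvPolynomial τ ℂ) = C 4 from (map_ofNat C 4).symm, ← C_mul]; norm_num

/-- The linear change of coordinates to `x, y, z, …`. -/
noncomputable def lightCone (N₁ N₂ k : ℕ) : MvPolynomial (Fin (k + 3) × QIdx N₁ N₂) ℂ ≃ₐ[ℂ]
    MvPolynomial (Fin (k + 3) × QIdx N₁ N₂) ℂ :=
  AlgEquiv.ofAlgHom (toLightCone N₁ N₂ k) (ofLightCone N₁ N₂ k)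
    (by
      refine MvPolynomial.algHom_ext fun ⟨i, s⟩ => ?_
      have e10 : (1 : Fin (k + 3)) ≠ 0 := by simp
      rw [AlgHom.comp_apply, ofLightCone, aeval_X, AlgHom.id_apply]
      dsimp only
      split_ifs with h0 h1
      · subst h0
        simp only [toLightCone, map_mul, map_sub, algHom_C, algebraMap_eq, aeval_X, if_true,
          if_neg e10]
        linear_combination (X (0, s) : MvPolynomial (Fin (k + 3) × QIdx N₁ N₂) ℂ) * C_half
          - C (1 / 2) * (X (0, s) - C (1 / 4) * X (1, s)) * C_I_mul_self
      · subst h1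
        simp only [toLightCone, map_mul, map_add, algHom_C, algebraMap_eq, aeval_X, if_true,
          if_neg e10, map_ofNat]
        linear_combination (X (1, s) : MvPolynomial (Fin (k + 3) × QIdx N₁ N₂) ℂ) * C_quarter
          + 2 * (X (0, s) - C (1 / 4) * X (1, s)) * C_I_mul_self
      · simp only [toLightCone, aeval_X, if_neg h0, if_neg h1])
    (by
      refine MvPolynomial.algHom_ext fun ⟨i, s⟩ => ?_
      have e10 : (1 : Fin (k + 3)) ≠ 0 := by simp
      rw [AlgHom.comp_apply, toLightCone, aeval_X, AlgHom.id_apply]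
      dsimp only
      have h24 : (C (1 / 4) : MvPolynomial (Fin (k + 3) × QIdx N₁ N₂) ℂ) * 2 = C (1 / 2) := by
        rw [← C_two_eq, ← C_mul]; norm_num
      split_ifs with h0 h1
      · subst h0
        simp only [ofLightCone, map_mul, map_add, algHom_C, algebraMap_eq, aeval_X, if_true,
          if_neg e10, map_ofNat]
        linear_combination (X (0, s) : MvPolynomial (Fin (k + 3) × QIdx N₁ N₂) ℂ) * C_half
          + (X (0, s) + C Complex.I * X (1, s)) * h24
      · subst h1
        simp only [ofLightCone, map_mul, map_sub, algHom_C, algebraMap_eq, aeval_X, if_true,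
          if_neg e10, map_ofNat]
        linear_combination -(C Complex.I * (X (0, s) + C Complex.I * X (1, s)) :
            MvPolynomial (Fin (k + 3) × QIdx N₁ N₂) ℂ) * h24
          - (C (1 / 2) * 2 * X (1, s)) * C_I_mul_self
          + (X (1, s) : MvPolynomial (Fin (k + 3) × QIdx N₁ N₂) ℂ) * C_half
      · simp only [ofLightCone, aeval_X, if_neg h0, if_neg h1])

lemma lightCone_qRel (k : ℕ) (l : ℤ) :
    lightCone N₁ N₂ k (qRel (k + 3) N₁ N₂ l) = qRel' N₁ N₂ k l := by
  have e10 : (1 : Fin (k + 3)) ≠ 0 := by simp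
  have hX (v) : lightCone N₁ N₂ k (X v) = if v.1 = 0 then X (0, v.2) + C (1 / 4) * X (1, v.2)
      else if v.1 = 1 then C Complex.I * (X (0, v.2) - C (1 / 4) * X (1, v.2)) else X v :=
    aeval_X _ _
  -- The mixed term is not symmetric in `p, q`; only its sum over `p + q = l` matters.
  let S (a b : QIdx N₁ N₂ → MvPolynomial (Fin (k + 3) × QIdx N₁ N₂) ℂ) :=
    ∑ p : QIdx N₁ N₂, ∑ q : QIdx N₁ N₂, if (p : ℤ) + (q : ℤ) = l then a p * b q else 0
  have hS (a b) : S a b = S b a := by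
    simp only [S]
    rw [Finset.sum_comm]
    refine Finset.sum_congr rfl fun p _ => Finset.sum_congr rfl fun q _ => ?_
    rw [add_comm (q : ℤ), mul_comm (a q)]
  have hterm (p q : QIdx N₁ N₂) :
      lightCone N₁ N₂ k (∑ i : Fin (k + 3), X (i, p) * X (i, q)) = summand N₁ N₂ k p q +
        C (1 / 2) * (X (1, p) * X (0, q)) - C (1 / 2) * (X (0, p) * X (1, q)) := by
    have h24 : (C (1 / 4) : MvPolynomial (Fin (k + 3) × QIdx N₁ N₂) ℂ) * 2 = C (1 / 2) := by
      rw [← C_two_eq, ← C_mul]; norm_num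
    have hrest (j : Fin (k + 1)) (s : QIdx N₁ N₂) :
        lightCone N₁ N₂ k (X (j.succ.succ, s)) = X (j.succ.succ, s) := by
      rw [hX, if_neg (Fin.succ_ne_zero _), if_neg (fin_succ_succ_ne_one j)]
    rw [Fin.sum_univ_succ, Fin.sum_univ_succ, summand]
    simp only [map_add, map_sum, map_mul, hrest, Fin.succ_zero_eq_one]
    simp only [hX, if_true, if_neg e10]
    linear_combination ((X (0, p) - C (1 / 4) * X (1, p)) * (X (0, q) - C (1 / 4) * X (1, q)) :
        MvPolynomial (Fin (k + 3) × QIdx N₁ N₂) ℂ) * C_I_mul_self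
      + (X (1, p) * X (0, q) + X (0, p) * X (1, q)) * h24
      + (X (0, p) * X (1, q)) * C_half
  have hsplit : lightCone N₁ N₂ k (qRel (k + 3) N₁ N₂ l) = qRel' N₁ N₂ k l +
      C (1 / 2) * S (fun p => X (1, p)) (fun q => X (0, q)) -
      C (1 / 2) * S (fun p => X (0, p)) (fun q => X (1, q)) := by
    simp only [qRel, qRel', S, map_sum, Finset.mul_sum, ← Finset.sum_add_distrib,
      ← Finset.sum_sub_distrib]
    refine Finset.sum_congr rfl fun p _ => Finset.sum_congr rfl fun q _ => ?_
    split_ifs with h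
    · rw [← hterm p q, map_sum]
    · simp
  rw [hsplit, hS, add_sub_cancel_right]

end Quasimap

end StraightenedKoszul

/-- For `n ≥ 3`, the cohomology of the Chevalley–Eilenberg complex of the two-step
nilpotent Lie superalgebra `L` (odd generators `λⁱ[s]`, even central `b[l]`,
`[λⁱ[s],λʲ[t]] = δ_{ij} b[s+t]`) is concentrated in degree zero, where it equals
the quasimap algebra `AQ = ℂ[λⁱ[s]]/(r[l])`.  Since the Chevalley–Eilenberg
complex is the Koszul complex of the elements `r[l]`, this is equivalent to the
statement that the relations `r[l]`, `−2N₁ ≤ l ≤ 2N₂`, form a regular sequence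
in the polynomial ring `ℂ[λⁱ[s]]` (whose quotient is `AQ` by definition). -/
theorem stmt13 (n N₁ N₂ : ℕ) (hn : 3 ≤ n) :
    RingTheory.Sequence.IsRegular (MvPolynomial (Fin n × QIdx N₁ N₂) ℂ)
      (((Finset.Icc (-(2 * N₁ : ℤ)) (2 * N₂ : ℤ)).sort (· ≤ ·)).map
        (qRel n N₁ N₂)) := by
  obtain ⟨k, rfl⟩ := Nat.exists_eq_add_of_le' hn
  refine ((StraightenedKoszul.lightCone N₁ N₂ k).toAddEquiv.isRegular_congr ?_).2
    (StraightenedKoszul.isRegular_of_coprime_leading (StraightenedKoszul.wt N₁ N₂ k)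
      (StraightenedKoszul.qRel' N₁ N₂ k) (StraightenedKoszul.lead N₁ N₂ k)
      ((Finset.Icc (-(2 * N₁ : ℤ)) (2 * N₂ : ℤ)).sort (· ≤ ·)) (Finset.sort_nodup _ _)
      (fun l _ => StraightenedKoszul.lead_ne_zero k l) ?_ ?_)
  · rw [List.forall₂_map_left_iff, List.forall₂_map_right_iff, List.forall₂_same]
    intro l _ p
    change StraightenedKoszul.lightCone N₁ N₂ k (qRel (k + 3) N₁ N₂ l * p) = _
    rw [map_mul, StraightenedKoszul.lightCone_qRel]
    rfl
  · intro l hl l' hl' hne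
    rw [Finset.mem_sort, Finset.mem_Icc] at hl hl'
    rw [Finset.disjoint_left]
    intro v hv hv'
    exact hne ((StraightenedKoszul.eq_of_mem_support_lead k hl.1 hl.2 hv).trans
      (StraightenedKoszul.eq_of_mem_support_lead k hl'.1 hl'.2 hv').symm)
  · intro l hl
    rw [Finset.mem_sort, Finset.mem_Icc] at hl
    exact StraightenedKoszul.qRel'_sub_mem k hl.1 hl.2
end
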